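/- If β is an isotropic imaginary root (i.e. p(β) = 1) belonging to Σ_λ, then some sequence of admissible reflections sends the pair (λ,β) to a pair (λ',β') in which the support quiver Q' of β' is an extended Dynkin quiver and β' is its minimal positive imaginary root δ; consequently N(λ,β) ≅ N(λ',δ), which is a deformation of the Kleinian singularity of type Q'. -/

import Mathlib

open scoped BigOperators

noncomputable section

/-- A quiver with a finite vertex set `I` and a finite arrow set `A`;
`h a` and `t a` are the head and the tail of the arrow `a`. -/
structure FinQuiver where
  I : Type
  [fintypeI : Fintype I]
  [decEqI : DecidableEq I]
  A : Type
  [fintypeA : Fintype A]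
  h : A → I
  t : A → I

attribute [instance] FinQuiver.fintypeI FinQuiver.decEqI FinQuiver.fintypeA

namespace FinQuiver

variable (Q : FinQuiver)

/-- Arrows of the double quiver `Q̄` : every arrow `a : i → j` of `Q` (as `Sum.inl a`)
together with a reverse arrow `a* : j → i` (as `Sum.inr a`). -/
@[reducible] def DA : Type := Q.A ⊕ Q.A

instance : Fintype Q.DA := inferInstanceAs (Fintype (Q.A ⊕ Q.A))

/-- Head of an arrow of the double quiver. -/
@[reducible] def dh : Q.DA → Q.I := fun a => match a with
  | Sum.inl a => Q.h a
  | Sum.inr a => Q.t a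

/-- Tail of an arrow of the double quiver. -/
@[reducible] def dt : Q.DA → Q.I := fun a => match a with
  | Sum.inl a => Q.t a
  | Sum.inr a => Q.h a

/-- The symmetric bilinear form
`(α,β) = ∑_{i∈I} 2 α_i β_i − ∑_{a∈Q̄} α_{h(a)} β_{t(a)}` on `ℤ^I`. -/
def bil (α β : Q.I → ℤ) : ℤ :=
  (∑ i, 2 * α i * β i) - ∑ a : Q.DA, α (Q.dh a) * β (Q.dt a)

/-- `p(α) = 1 − q(α) = 1 − α·α + ∑_{a ∈ Q} α_{t(a)} α_{h(a)}`. -/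
def pp (α : Q.I → ℤ) : ℤ :=
  1 - (∑ i, α i * α i) + ∑ a : Q.A, α (Q.t a) * α (Q.h a)

/-- The coordinate vector `ε_i` at a vertex `i`. -/
def ev (i : Q.I) : Q.I → ℤ := fun j => if j = i then 1 else 0

/-- The coordinate vector of a vertex, as a vector of natural numbers. -/
def evN (i : Q.I) : Q.I → ℕ := fun j => if j = i then 1 else 0

/-- A vertex is loopfree if no arrow has both its head and its tail there. -/
def Loopfree (i : Q.I) : Prop := ∀ a : Q.A, ¬ (Q.h a = i ∧ Q.t a = i)

/-- The reflection `s_i(α) = α − (α,ε_i) ε_i` at a (loopfree) vertex `i`. -/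
def refl (i : Q.I) (α : Q.I → ℤ) : Q.I → ℤ := α - Q.bil α (Q.ev i) • Q.ev i

/-- Two vertices are joined by some arrow. -/
def Adj (i j : Q.I) : Prop :=
  ∃ a : Q.A, (Q.h a = i ∧ Q.t a = j) ∨ (Q.h a = j ∧ Q.t a = i)

/-- The quiver is connected. -/
def Connected : Prop := ∀ i j : Q.I, Relation.ReflTransGen Q.Adj i j

/-- The support of the vector `α` is connected in `Q`. -/
def SuppConnected (α : Q.I → ℤ) : Prop :=
  ∀ i j : Q.I, α i ≠ 0 → α j ≠ 0 →
    Relation.ReflTransGen (fun x y => α x ≠ 0 ∧ α y ≠ 0 ∧ Q.Adj x y) i j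

/-- The fundamental region: nonzero nonnegative vectors with connected support
such that `(α, ε_i) ≤ 0` for every vertex `i`. -/
def InFund (α : Q.I → ℤ) : Prop :=
  α ≠ 0 ∧ (∀ i, 0 ≤ α i) ∧ Q.SuppConnected α ∧ ∀ i, Q.bil α (Q.ev i) ≤ 0

/-- The roots of the Kac root system attached to `Q` : the real roots form the orbit
of the simple roots (coordinate vectors at loopfree vertices) under the reflections at
loopfree vertices, and the imaginary roots form the orbit of `±(fundamental region)`
under these reflections. -/
inductive IsRoot : (Q.I → ℤ) → Prop
  | simple (i : Q.I) (hi : Q.Loopfree i) : IsRoot (Q.ev i)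
  | fund (α : Q.I → ℤ) (hα : Q.InFund α) : IsRoot α
  | neg_fund (α : Q.I → ℤ) (hα : Q.InFund α) : IsRoot (-α)
  | reflect (i : Q.I) (hi : Q.Loopfree i) (α : Q.I → ℤ) (hα : IsRoot α) :
      IsRoot (Q.refl i α)

/-- Positive roots: roots all of whose components are nonnegative. -/
def IsPosRoot (α : Q.I → ℤ) : Prop := Q.IsRoot α ∧ (∀ i, 0 ≤ α i) ∧ α ≠ 0

/-- The Tits form is positive semidefinite. -/
def PosSemidef : Prop := ∀ α : Q.I → ℤ, 0 ≤ Q.bil α α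

/-- The Tits form is positive definite. -/
def PosDef : Prop := Q.PosSemidef ∧ ∀ α : Q.I → ℤ, Q.bil α α = 0 → α = 0

/-- Dynkin quivers: connected, with positive definite Tits form. -/
def IsDynkin : Prop := Q.Connected ∧ Q.PosDef

/-- Extended Dynkin quivers: connected, with positive semidefinite but not
positive definite Tits form. -/
def IsExtDynkin : Prop := Q.Connected ∧ Q.PosSemidef ∧ ¬ Q.PosDef

/-- `δ` is the minimal positive imaginary root of an extended Dynkin quiver:
the minimal nonzero nonnegative vector in the radical of the Tits form. -/
def IsMinImag (δ : Q.I → ℤ) : Prop :=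
  (∀ i, 0 ≤ δ i) ∧ δ ≠ 0 ∧ (∀ i, Q.bil δ (Q.ev i) = 0) ∧
    ∀ β : Q.I → ℤ, (∀ i, 0 ≤ β i) → β ≠ 0 → (∀ i, Q.bil β (Q.ev i) = 0) →
      ∀ i, δ i ≤ β i

/-- The subquiver of `Q` on a subset `S` of vertices and a subset `B` of arrows. -/
def restrict (S : Set Q.I) (B : Set Q.A) (hh : ∀ a ∈ B, Q.h a ∈ S)
    (ht : ∀ a ∈ B, Q.t a ∈ S) : FinQuiver :=
  { I := S
    fintypeI := Fintype.ofFinite S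
    decEqI := Classical.decEq _
    A := B
    fintypeA := Fintype.ofFinite B
    h := fun a => ⟨Q.h a.1, hh a.1 a.2⟩
    t := fun a => ⟨Q.t a.1, ht a.1 a.2⟩ }

/-- The support quiver of a vector: the full subquiver on the support of `β`. -/
def suppQuiver (β : Q.I → ℤ) : FinQuiver :=
  Q.restrict {i | β i ≠ 0} {a | β (Q.h a) ≠ 0 ∧ β (Q.t a) ≠ 0}
    (fun _ ha => ha.1) (fun _ ha => ha.2)

/-- A dimension vector (of natural numbers), viewed in `ℤ^I`. -/
def toZ (α : Q.I → ℕ) : Q.I → ℤ := fun i => (α i : ℤ)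

/-- An oriented cycle in the double quiver `Q̄`, consisting of `n+1` arrows,
the tail of each arrow being the head of the (cyclically) next one. -/
structure Cyc (Q' : FinQuiver) where
  n : ℕ
  ar : Fin (n + 1) → Q'.DA
  compat : ∀ i : Fin (n + 1), Q'.dt (ar i) = Q'.dh (ar (i + 1))

section WithField

variable (K : Type) [Field K]

/-- `λ·α = ∑_i λ_i α_i`. -/
def pair (l : Q.I → K) (α : Q.I → ℤ) : K := ∑ i, l i * (α i : K)

/-- `R_λ^+`, the set of positive roots `α` with `λ·α = 0`. -/
def Rplus (l : Q.I → K) : Set (Q.I → ℤ) :=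
  {α | Q.IsPosRoot α ∧ Q.pair K l α = 0}

/-- `ℕ R_λ^+`, the set of sums (including the empty sum `0`) of elements of `R_λ^+`. -/
def NRplus (l : Q.I → K) : Set (Q.I → ℤ) :=
  (AddSubmonoid.closure (Q.Rplus K l) : AddSubmonoid (Q.I → ℤ))

/-- `Σ_λ` : the elements `α ∈ R_λ^+` with `p(α) > ∑ p(β⁽ᵗ⁾)` for every decomposition
of `α` as a sum of at least two elements `β⁽ᵗ⁾` of `R_λ^+`. -/
def SigmaSet (l : Q.I → K) : Set (Q.I → ℤ) :=
  {α | α ∈ Q.Rplus K l ∧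
    ∀ (n : ℕ) (β : Fin n → (Q.I → ℤ)), 2 ≤ n → (∀ j, β j ∈ Q.Rplus K l) →
      α = ∑ j, β j → (∑ j, Q.pp (β j)) < Q.pp α}

/-- The dual reflection `r_i(λ)_j = λ_j − (ε_i,ε_j) λ_i`. -/
def coRefl (i : Q.I) (l : Q.I → K) : Q.I → K :=
  fun j => l j - (Q.bil (Q.ev i) (Q.ev j) : ℤ) * l i

/-- A single admissible reflection applied to the pair `(λ, α)`:
a reflection at a loopfree vertex `i` with `λ_i ≠ 0`. -/
def AdmStep (x y : (Q.I → K) × (Q.I → ℤ)) : Prop :=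
  ∃ i : Q.I, Q.Loopfree i ∧ x.1 i ≠ 0 ∧ y.1 = Q.coRefl K i x.1 ∧ y.2 = Q.refl i x.2

/-- `(ν,β)` is obtained from `(λ,α)` by a sequence of admissible reflections:
the two pairs lie in the same class of the equivalence relation generated by
admissible reflections. -/
def AdmEquiv (x y : (Q.I → K) × (Q.I → ℤ)) : Prop :=
  Relation.EqvGen (Q.AdmStep K) x y

/-- The space `Rep(Q̄,α)` of representations of the double quiver. -/
def Rep (α : Q.I → ℕ) : Type :=
  ∀ a : Q.DA, Matrix (Fin (α (Q.dh a))) (Fin (α (Q.dt a))) K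

/-- The moment map
`μ_α(x)_i = ∑_{a∈Q, h(a)=i} x_a x_{a*} − ∑_{a∈Q, t(a)=i} x_{a*} x_a`. -/
def moment (α : Q.I → ℕ) (x : Q.Rep K α) (i : Q.I) :
    Matrix (Fin (α i)) (Fin (α i)) K :=
  (∑ a : Q.A, if h : Q.h a = i then
      (x (Sum.inl a) * x (Sum.inr a)).submatrix
        (Fin.cast (congrArg α h).symm) (Fin.cast (congrArg α h).symm)
    else 0)
  - ∑ a : Q.A, if h : Q.t a = i then
      (x (Sum.inr a) * x (Sum.inl a)).submatrix
        (Fin.cast (congrArg α h).symm) (Fin.cast (congrArg α h).symm)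
    else 0

/-- The fibre `μ_α^{-1}(λ)` of the moment map over (the central element
corresponding to) `λ`. -/
def MomentFiber (l : Q.I → K) (α : Q.I → ℕ) : Set (Q.Rep K α) :=
  {x | ∀ i : Q.I, Q.moment K α x i = l i • (1 : Matrix (Fin (α i)) (Fin (α i)) K)}

/-- The group `∏_i GL(α_i,K)`; it acts on `Rep(Q̄,α)` by conjugation, with the same
orbits and the same invariant functions as `G(α) = (∏_i GL(α_i,K))/K^*`. -/
def Gl (α : Q.I → ℕ) : Type := ∀ i : Q.I, Matrix.GeneralLinearGroup (Fin (α i)) K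

/-- The conjugation action of `∏_i GL(α_i,K)` on `Rep(Q̄,α)`. -/
def glAct (α : Q.I → ℕ) (g : Q.Gl K α) (x : Q.Rep K α) : Q.Rep K α :=
  fun a => (g (Q.dh a) : Matrix (Fin (α (Q.dh a))) (Fin (α (Q.dh a))) K) * x a *
    (((g (Q.dt a))⁻¹ : Matrix.GeneralLinearGroup (Fin (α (Q.dt a))) K) :
      Matrix (Fin (α (Q.dt a))) (Fin (α (Q.dt a))) K)

/-- Coordinates on `Rep(Q̄,α)`: matrix entries. -/
def Coords (α : Q.I → ℕ) : Type :=
  Σ a : Q.DA, Fin (α (Q.dh a)) × Fin (α (Q.dt a))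

/-- The coordinate ring `K[V]` of a subset `V` of `Rep(Q̄,α)` : the algebra of
`K`-valued functions on `V` which are restrictions of polynomial functions. -/
def fnRing (α : Q.I → ℕ) (V : Set (Q.Rep K α)) : Subalgebra K (↥V → K) :=
  (MvPolynomial.aeval
    (fun c : Q.Coords α => fun v : ↥V => v.1 c.1 c.2.1 c.2.2) :
    MvPolynomial (Q.Coords α) K →ₐ[K] (↥V → K)).range

end WithField

end FinQuiver

/-- The subalgebra of functions invariant under a relation (e.g. the orbit
relation of a group action). -/
def relInv (K : Type) [Field K] {V : Type} (R : V → V → Prop) :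
    Subalgebra K (V → K) where
  carrier := {f | ∀ x y : V, R x y → f x = f y}
  mul_mem' := by
    intro f g hf hg x y hxy
    simp only [Pi.mul_apply, hf x y hxy, hg x y hxy]
  one_mem' := fun x y _ => rfl
  add_mem' := by
    intro f g hf hg x y hxy
    simp only [Pi.add_apply, hf x y hxy, hg x y hxy]
  zero_mem' := fun x y _ => rfl
  algebraMap_mem' := fun c x y _ => rfl

namespace FinQuiver

variable (Q : FinQuiver) (K : Type) [Field K]

/-- The coordinate ring of the Marsden–Weinstein reduction
`N(λ,α) = μ_α^{-1}(λ) ⫽ G(α)` : the `G(α)`-invariant functions in the coordinate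
ring of `μ_α^{-1}(λ)`.  Two such reductions are isomorphic as (affine) varieties
exactly when these `K`-algebras are isomorphic. -/
def InvRing (l : Q.I → K) (α : Q.I → ℕ) :
    Subalgebra K (↥(Q.MomentFiber K l α) → K) :=
  Q.fnRing K α (Q.MomentFiber K l α) ⊓
    relInv K (fun x y : ↥(Q.MomentFiber K l α) =>
      ∃ g : Q.Gl K α, y.1 = Q.glAct K α g x.1)

/-- Index type for a product `∏_t X_t^{m_t}`. -/
@[reducible] def SymIdx (s : ℕ) (m : Fin s → ℕ) : Type := Σ t : Fin s, Fin (m t)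

/-- The product `∏_{t} Rep(Q̄, d_t)^{m_t}` of representation spaces. -/
def SymRep (s : ℕ) (m : Fin s → ℕ) (d : Fin s → (Q.I → ℕ)) : Type :=
  ∀ p : SymIdx s m, Q.Rep K (d p.1)

/-- The product `∏_t μ_{d_t}^{-1}(λ)^{m_t}` of moment map fibres. -/
def SymFiber (s : ℕ) (m : Fin s → ℕ) (d : Fin s → (Q.I → ℕ)) (l : Q.I → K) :
    Set (Q.SymRep K s m d) :=
  {x | ∀ p : SymIdx s m, x p ∈ Q.MomentFiber K l (d p.1)}

/-- Polynomial functions on the product of fibres. -/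
def symFnRing (s : ℕ) (m : Fin s → ℕ) (d : Fin s → (Q.I → ℕ)) (l : Q.I → K) :
    Subalgebra K (↥(Q.SymFiber K s m d l) → K) :=
  (MvPolynomial.aeval
    (fun c : Σ p : SymIdx s m, Q.Coords (d p.1) =>
      fun v : ↥(Q.SymFiber K s m d l) => v.1 c.1 c.2.1 c.2.2.1 c.2.2.2) :
    MvPolynomial (Σ p : SymIdx s m, Q.Coords (d p.1)) K →ₐ[K]
      (↥(Q.SymFiber K s m d l) → K)).range

/-- The componentwise action of the product of the groups `∏ GL(d_t)^{m_t}`. -/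
def symGlAct (s : ℕ) (m : Fin s → ℕ) (d : Fin s → (Q.I → ℕ))
    (g : ∀ p : SymIdx s m, Q.Gl K (d p.1)) (x : Q.SymRep K s m d) :
    Q.SymRep K s m d :=
  fun p => Q.glAct K (d p.1) (g p) (x p)

/-- The action of `∏_t S_{m_t}` permuting the factors of each `X_t^{m_t}`. -/
def symPermAct (s : ℕ) (m : Fin s → ℕ) (d : Fin s → (Q.I → ℕ))
    (π : ∀ t : Fin s, Equiv.Perm (Fin (m t))) (x : Q.SymRep K s m d) :
    Q.SymRep K s m d :=
  fun p => x ⟨p.1, π p.1 p.2⟩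

/-- The coordinate ring of the product of symmetric products
`∏_t S^{m_t} N(λ, d_t)` of Marsden–Weinstein reductions: functions on
`∏_t μ_{d_t}^{-1}(λ)^{m_t}` which are polynomial, invariant under all the groups
`G(d_t)` acting on the separate factors, and symmetric under permutations of the
`m_t` factors of each type `t`. -/
def SymInvRing (s : ℕ) (m : Fin s → ℕ) (d : Fin s → (Q.I → ℕ)) (l : Q.I → K) :
    Subalgebra K (↥(Q.SymFiber K s m d l) → K) :=
  Q.symFnRing K s m d l ⊓
    relInv K (fun x y : ↥(Q.SymFiber K s m d l) =>
      ∃ g : ∀ p : SymIdx s m, Q.Gl K (d p.1), y.1 = Q.symGlAct K s m d g x.1) ⊓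
    relInv K (fun x y : ↥(Q.SymFiber K s m d l) =>
      ∃ π : ∀ t : Fin s, Equiv.Perm (Fin (m t)), y.1 = Q.symPermAct K s m d π x.1)

/-- The trace function `tr_p` of an oriented cycle `p` in `Q̄` :
`tr_p(x) = tr(x_{a_1} ⋯ x_{a_ℓ})`, written out via matrix entries. -/
def cycTr (α : Q.I → ℕ) (p : Q.Cyc) (x : Q.Rep K α) : K :=
  ∑ c : ∀ i : Fin (p.n + 1), Fin (α (Q.dh (p.ar i))),
    ∏ i : Fin (p.n + 1),
      x (p.ar i) (c i) (Fin.cast (congrArg α (p.compat i)).symm (c (i + 1)))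

/-- `U` is a subrepresentation of the `Π^λ`-module given by the point
`x ∈ Rep(Q̄,α)` : a collection of subspaces stable under all the maps `x_a`. -/
def SubRep (α : Q.I → ℕ) (x : Q.Rep K α)
    (U : ∀ i : Q.I, Submodule K (Fin (α i) → K)) : Prop :=
  ∀ a : Q.DA, ∀ v ∈ U (Q.dt a), (x a).mulVec v ∈ U (Q.dh a)

/-- The module given by `x` has the simple module `S_{i₀}` (dimension vector
`ε_{i₀}`, all arrows acting as zero) as a composition factor: it has a subquotient
of dimension vector `ε_{i₀}` on which all arrows act as zero. -/
def HasSFactor (α : Q.I → ℕ) (i0 : Q.I) (x : Q.Rep K α) : Prop :=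
  ∃ U W : ∀ i : Q.I, Submodule K (Fin (α i) → K),
    Q.SubRep K α x U ∧ Q.SubRep K α x W ∧ (∀ i, U i ≤ W i) ∧
    (∀ i, Module.finrank K (W i) =
      Module.finrank K (U i) + (if i = i0 then 1 else 0)) ∧
    (∀ a : Q.DA, Q.dh a = i0 → Q.dt a = i0 →
      ∀ v ∈ W (Q.dt a), (x a).mulVec v ∈ U (Q.dh a))

/-- `W/U` is a simple subquotient of the module given by `x`; the simple
subquotients of a module are, up to isomorphism, exactly its composition factors. -/
def SimpleSubquot (α : Q.I → ℕ) (x : Q.Rep K α)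
    (U W : ∀ i : Q.I, Submodule K (Fin (α i) → K)) : Prop :=
  Q.SubRep K α x U ∧ Q.SubRep K α x W ∧ (∀ i, U i ≤ W i) ∧ U ≠ W ∧
    ∀ V : ∀ i : Q.I, Submodule K (Fin (α i) → K),
      Q.SubRep K α x V → (∀ i, U i ≤ V i) → (∀ i, V i ≤ W i) → V = U ∨ V = W

/-- The direct sum map `∏_{j=1}^m Rep(Q̄,δ) → Rep(Q̄,mδ)` (block diagonal). -/
def dsMap (δ : Q.I → ℕ) (m : ℕ) (y : Fin m → Q.Rep K δ) :
    Q.Rep K (fun i => m * δ i) :=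
  fun a => Matrix.of fun r c =>
    if (finProdFinEquiv.symm r).1 = (finProdFinEquiv.symm c).1 then
      y (finProdFinEquiv.symm r).1 a (finProdFinEquiv.symm r).2
        (finProdFinEquiv.symm c).2
    else 0

end FinQuiver


namespace FinQuiver

variable (Q : FinQuiver)

lemma bil_eq (α β : Q.I → ℤ) : Q.bil α β = (∑ i, 2 * α i * β i)
    - ∑ a : Q.A, (α (Q.h a) * β (Q.t a) + α (Q.t a) * β (Q.h a)) := by
  unfold bil
  rw [Finset.sum_add_distrib]
  congr 1
  exact Fintype.sum_sum_type _

lemma bil_symm (α β : Q.I → ℤ) : Q.bil α β = Q.bil β α := by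
  rw [bil_eq, bil_eq]
  congr 1
  · exact Finset.sum_congr rfl fun i _ => by ring
  · exact Finset.sum_congr rfl fun i _ => by ring

lemma bil_add_left (α β γ : Q.I → ℤ) : Q.bil (α + β) γ = Q.bil α γ + Q.bil β γ := by
  simp only [bil_eq, Pi.add_apply]
  rw [show ∀ a b c d : ℤ, a - b + (c - d) = (a + c) - (b + d) by intros; ring,
    ← Finset.sum_add_distrib, ← Finset.sum_add_distrib]
  congr 1
  · exact Finset.sum_congr rfl fun i _ => by ring
  · exact Finset.sum_congr rfl fun i _ => by ring

lemma bil_smul_left (c : ℤ) (α γ : Q.I → ℤ) : Q.bil (c • α) γ = c * Q.bil α γ := by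
  simp only [bil_eq, Pi.smul_apply, smul_eq_mul]
  rw [mul_sub, Finset.mul_sum, Finset.mul_sum]
  congr 1
  · exact Finset.sum_congr rfl fun i _ => by ring
  · exact Finset.sum_congr rfl fun i _ => by ring

lemma bil_sub_left (α β γ : Q.I → ℤ) : Q.bil (α - β) γ = Q.bil α γ - Q.bil β γ := by
  have h := Q.bil_add_left (α - β) β γ
  rw [sub_add_cancel] at h
  linarith

lemma bil_add_right (α β γ : Q.I → ℤ) : Q.bil γ (α + β) = Q.bil γ α + Q.bil γ β := by
  rw [bil_symm, bil_add_left, Q.bil_symm α, Q.bil_symm β]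

lemma bil_sub_right (α β γ : Q.I → ℤ) : Q.bil γ (α - β) = Q.bil γ α - Q.bil γ β := by
  rw [bil_symm, bil_sub_left, Q.bil_symm α, Q.bil_symm β]

lemma bil_smul_right (c : ℤ) (α γ : Q.I → ℤ) : Q.bil γ (c • α) = c * Q.bil γ α := by
  rw [bil_symm, bil_smul_left, Q.bil_symm α]

lemma bil_neg_left (α γ : Q.I → ℤ) : Q.bil (-α) γ = - Q.bil α γ := by
  have := Q.bil_smul_left (-1) α γ
  simpa using this

lemma bil_ev (α : Q.I → ℤ) (i : Q.I) : Q.bil α (Q.ev i) = 2 * α i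
    - ∑ a : Q.A, ((if Q.t a = i then α (Q.h a) else 0) + (if Q.h a = i then α (Q.t a) else 0)) := by
  rw [bil_eq]
  simp [ev]

lemma bil_ev_self (i : Q.I) (hi : Q.Loopfree i) : Q.bil (Q.ev i) (Q.ev i) = 2 := by
  rw [bil_ev]
  have : ∀ a : Q.A, ((if Q.t a = i then Q.ev i (Q.h a) else 0)
      + (if Q.h a = i then Q.ev i (Q.t a) else 0)) = 0 := by
    intro a
    have := hi a
    unfold ev
    split_ifs <;> simp_all
  rw [Finset.sum_congr rfl fun a _ => this a]
  simp [ev]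

lemma bil_ev_ne (i j : Q.I) (hij : i ≠ j) : Q.bil (Q.ev i) (Q.ev j) ≤ 0 := by
  rw [bil_ev]
  have : (0 : ℤ) ≤ ∑ a : Q.A, ((if Q.t a = j then Q.ev i (Q.h a) else 0)
      + (if Q.h a = j then Q.ev i (Q.t a) else 0)) := by
    apply Finset.sum_nonneg
    intro a _
    unfold ev
    split_ifs <;> simp
  have h2 : Q.ev i j = 0 := by simp [ev, hij.symm]
  rw [h2]; linarith

lemma two_pp (α : Q.I → ℤ) : 2 * Q.pp α = 2 - Q.bil α α := by
  rw [bil_eq, pp, mul_add, mul_sub, Finset.mul_sum, Finset.mul_sum]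
  rw [show ∀ a b : ℤ, 2 - (a - b) = 2 * 1 - a + b by intros; ring]
  congr 1
  · congr 1
    exact Finset.sum_congr rfl fun i _ => by ring
  · exact Finset.sum_congr rfl fun i _ => by ring

lemma refl_add (i : Q.I) (α β : Q.I → ℤ) : Q.refl i (α + β) = Q.refl i α + Q.refl i β := by
  simp only [refl, bil_add_left]; module

lemma refl_smul (i : Q.I) (c : ℤ) (α : Q.I → ℤ) : Q.refl i (c • α) = c • Q.refl i α := by
  simp only [refl, bil_smul_left]; module

lemma refl_refl (i : Q.I) (hi : Q.Loopfree i) (α : Q.I → ℤ) : Q.refl i (Q.refl i α) = α := by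
  simp only [refl, bil_sub_left, bil_smul_left, Q.bil_ev_self i hi]; module

lemma bil_refl (i : Q.I) (hi : Q.Loopfree i) (α β : Q.I → ℤ) :
    Q.bil (Q.refl i α) (Q.refl i β) = Q.bil α β := by
  simp only [refl, bil_sub_left, bil_smul_left, bil_sub_right, bil_smul_right, Q.bil_ev_self i hi,
    Q.bil_symm (Q.ev i) β]
  ring

lemma refl_ev_self (i : Q.I) (hi : Q.Loopfree i) : Q.refl i (Q.ev i) = - Q.ev i := by
  simp only [refl, Q.bil_ev_self i hi]; module

lemma refl_apply_ne (i j : Q.I) (hij : j ≠ i) (α : Q.I → ℤ) : Q.refl i α j = α j := by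
  simp [refl, ev, hij]

lemma refl_apply_self (i : Q.I) (α : Q.I → ℤ) :
    Q.refl i α i = α i - Q.bil α (Q.ev i) := by
  simp [refl, ev]

/-- Loopfree vertices. -/
abbrev LF : Type := {i : Q.I // Q.Loopfree i}

/-- The action of a word in the simple reflections. -/
def act : List Q.LF → (Q.I → ℤ) → (Q.I → ℤ)
  | [], v => v
  | i :: L, v => Q.refl i.1 (act L v)

@[simp] lemma act_nil (v : Q.I → ℤ) : Q.act [] v = v := rfl
@[simp] lemma act_cons (i : Q.LF) (L : List Q.LF) (v : Q.I → ℤ) :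
    Q.act (i :: L) v = Q.refl i.1 (Q.act L v) := rfl

lemma act_append (L M : List Q.LF) (v : Q.I → ℤ) : Q.act (L ++ M) v = Q.act L (Q.act M v) := by
  induction L with
  | nil => rfl
  | cons i L ih => simp [ih]

lemma act_add (L : List Q.LF) (v w : Q.I → ℤ) : Q.act L (v + w) = Q.act L v + Q.act L w := by
  induction L with
  | nil => rfl
  | cons i L ih => simp [ih, refl_add]

lemma act_smul (L : List Q.LF) (c : ℤ) (v : Q.I → ℤ) : Q.act L (c • v) = c • Q.act L v := by
  induction L with
  | nil => rfl
  | cons i L ih => simp only [act_cons, ih, refl_smul]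

lemma act_neg (L : List Q.LF) (v : Q.I → ℤ) : Q.act L (-v) = - Q.act L v := by
  have := Q.act_smul L (-1) v
  simpa using this

lemma bil_act (L : List Q.LF) (v w : Q.I → ℤ) : Q.bil (Q.act L v) (Q.act L w) = Q.bil v w := by
  induction L with
  | nil => rfl
  | cons i L ih => simp [bil_refl _ _ i.2, ih]

lemma act_reverse (L : List Q.LF) (v : Q.I → ℤ) : Q.act L.reverse (Q.act L v) = v := by
  induction L with
  | nil => rfl
  | cons i L ih =>
    simp only [List.reverse_cons, act_append, act_cons, act_nil]
    rw [Q.refl_refl i.1 i.2, ih]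

/-- Two words act in the same way. -/
def SameAct (L M : List Q.LF) : Prop := ∀ v, Q.act L v = Q.act M v

/-- Reduced words. -/
def Reduced (L : List Q.LF) : Prop := ∀ M, Q.SameAct M L → L.length ≤ M.length

/-- Multiplying on the right with `s_i` gives no word shorter than `L`. -/
def ICond (L : List Q.LF) (i : Q.LF) : Prop :=
  ∀ M, Q.SameAct M (L ++ [i]) → L.length ≤ M.length

lemma Reduced.tail {k : Q.LF} {u : List Q.LF} (h : Q.Reduced (k :: u)) : Q.Reduced u := by
  intro M hM
  have := h (k :: M) (fun v => by simp [hM v])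
  simpa using this

lemma ICond.tail {k i : Q.LF} {u : List Q.LF} (h : Q.ICond (k :: u) i) : Q.ICond u i := by
  intro M hM
  have := h (k :: M) (fun v => by simp [hM v])
  simpa using this

lemma Reduced.not_dup {k : Q.LF} {u : List Q.LF} (h : Q.Reduced (k :: k :: u)) : False := by
  have := h u (fun v => by simp [Q.refl_refl _ k.2])
  simp at this

lemma not_icond_single {i : Q.LF} (h : Q.ICond [i] i) : False := by
  have := h [] (fun v => by simp [Q.refl_refl _ i.2])
  simp at this

lemma dihedral (i j : Q.LF) (hij : i.1 ≠ j.1) (u : List Q.LF) (hu : ∀ k ∈ u, k = i ∨ k = j)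
    (hr : Q.Reduced u) (hc : Q.ICond u i) :
    ∃ a b : ℤ, 0 ≤ a ∧ 0 ≤ b ∧ Q.act u (Q.ev i.1) = a • Q.ev i.1 + b • Q.ev j.1 := by
  have hn := Q.bil_ev_ne _ _ hij
  have hii := Q.bil_ev_self _ i.2
  have hjj := Q.bil_ev_self _ j.2
  have hji := Q.bil_symm (Q.ev j.1) (Q.ev i.1)
  obtain ⟨n, hnn⟩ : ∃ n, n = - Q.bil (Q.ev i.1) (Q.ev j.1) := ⟨_, rfl⟩
  have hb : Q.bil (Q.ev i.1) (Q.ev j.1) = -n := by omega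
  rw [hb] at hji
  have hcase : n = 0 ∨ n = 1 ∨ 2 ≤ n := by omega
  rcases hcase with h0 | h1 | h2
  · subst h0
    have key : u = [] ∨ u = [j] := by
      induction u with
      | nil => left; rfl
      | cons k u ih =>
        have ih2 := ih (fun x hx => hu x (by simp [hx])) hr.tail hc.tail
        rcases hu k (by simp) with rfl | rfl
        · rcases ih2 with rfl | rfl
          · exact (Q.not_icond_single hc).elim
          · exfalso
            have := hc [j] (fun v => by
              simp only [List.cons_append, List.nil_append, act_cons, act_nil, refl, bil_sub_left,
                bil_smul_left, hii, hjj, hji, hb]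
              module)
            simp at this
        · rcases ih2 with rfl | rfl
          · right; rfl
          · exact (hr.not_dup).elim
    rcases key with rfl | rfl
    · exact ⟨1, 0, by simp, by simp, by simp⟩
    · refine ⟨1, 0, by simp, by simp, ?_⟩
      simp [refl, hb]
  · subst h1
    have key : u = [] ∨ u = [j] ∨ u = [i, j] := by
      induction u with
      | nil => left; rfl
      | cons k u ih =>
        have ih2 := ih (fun x hx => hu x (by simp [hx])) hr.tail hc.tail
        rcases hu k (by simp) with rfl | rfl
        · rcases ih2 with rfl | rfl | rfl
          · exact (Q.not_icond_single hc).elim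
          · right; right; rfl
          · exact (hr.not_dup).elim
        · rcases ih2 with rfl | rfl | rfl
          · right; left; rfl
          · exact (hr.not_dup).elim
          · exfalso
            have := hc [i, k] (fun v => by
              simp only [List.cons_append, List.nil_append, act_cons, act_nil, refl, bil_sub_left,
                bil_smul_left, hii, hjj, hji, hb]
              module)
            simp at this
    rcases key with rfl | rfl | rfl
    · exact ⟨1, 0, by simp, by simp, by simp⟩
    · refine ⟨1, 1, by simp, by simp, ?_⟩
      simp [refl, hb]
    · refine ⟨0, 1, by simp, by simp, ?_⟩
      simp only [act_cons, act_nil, refl, bil_sub_left, bil_smul_left, hii, hji, hb]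
      module
  · have key : ∃ a b : ℤ, 0 ≤ a ∧ 0 ≤ b ∧ Q.act u (Q.ev i.1) = a • Q.ev i.1 + b • Q.ev j.1 ∧
        (u = [] → b ≤ a) ∧ (∀ u', u = i :: u' → b ≤ a) ∧ (∀ u', u = j :: u' → a ≤ b) := by
      induction u with
      | nil => exact ⟨1, 0, by simp, by simp, by simp, by simp, by simp, by simp⟩
      | cons k u ih =>
        obtain ⟨a, b, ha, hb', he, h1, h2', h3⟩ :=
          ih (fun x hx => hu x (by simp [hx])) hr.tail hc.tail
        rcases hu k (by simp) with rfl | rfl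
        · cases u with
          | nil => exact (Q.not_icond_single hc).elim
          | cons k' u' =>
            rcases hu k' (by simp) with rfl | rfl
            · exact (hr.not_dup).elim
            · have hab := h3 u' rfl
              have : b ≤ n * b - a := by nlinarith
              refine ⟨n * b - a, b, by omega, hb', ?_, by simp, fun _ _ => this, ?_⟩
              · rw [act_cons, he]
                simp only [refl, bil_add_left, bil_smul_left, hii, hji]
                module
              · intro u'' hh
                simp only [List.cons.injEq] at hh
                exact (hij (by rw [hh.1])).elim
        · have hab : b ≤ a := by
            cases u with
            | nil => exact h1 rfl
            | cons k' u' =>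
              rcases hu k' (by simp) with rfl | rfl
              · exact h2' u' rfl
              · exact (hr.not_dup).elim
          have : a ≤ n * a - b := by nlinarith
          refine ⟨a, n * a - b, ha, by omega, ?_, by simp, ?_, fun _ _ => this⟩
          · rw [act_cons, he]
            simp only [refl, bil_add_left, bil_smul_left, hjj, hb]
            module
          · intro u'' hh
            simp only [List.cons.injEq] at hh
            exact (hij (by rw [hh.1])).elim
    obtain ⟨a, b, h1, h2, h3, -⟩ := key
    exact ⟨a, b, h1, h2, h3⟩

lemma SameAct.congr {L L' M M' : List Q.LF} (h : Q.SameAct L L') (h' : Q.SameAct M M') :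
    Q.SameAct (L ++ M) (L' ++ M') := by
  intro v
  rw [act_append, act_append, h' v, h]

lemma real_pos : ∀ (n : ℕ) (L : List Q.LF), L.length = n → Q.Reduced L → ∀ i, Q.ICond L i →
    0 ≤ Q.act L (Q.ev i.1) := by
  intro n
  induction n using Nat.strong_induction_on with
  | _ n ih =>
  intro L hL hr i hc
  rcases List.eq_nil_or_concat L with rfl | ⟨L0, j, rfl⟩
  · intro k
    simp only [act_nil, ev, Pi.zero_apply]
    split_ifs <;> simp
  rw [List.concat_eq_append] at *
  have hij : i.1 ≠ j.1 := by
    intro h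
    have h' : i = j := Subtype.ext h
    subst h'
    have := hc L0 (fun v => by simp [act_append, Q.refl_refl _ i.2])
    simp at this
  -- decompositions
  let Dec : ℕ → Prop := fun m => ∃ v u : List Q.LF, v.length = m ∧ (∀ k ∈ u, k = i ∨ k = j) ∧
    Q.SameAct (v ++ u) (L0 ++ [j]) ∧ v.length + u.length = n
  have hDec0 : Dec L0.length := ⟨L0, [j], rfl, by simp, fun _ => rfl, by simpa using hL⟩
  have hex : ∃ m, Dec m := ⟨_, hDec0⟩
  classical
  obtain ⟨v, u, hv, hu, hs, hlen⟩ := Nat.find_spec hex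
  have hmin := fun m (hm : Dec m) => Nat.find_min' hex hm
  rw [← hv] at hmin
  have hvn : v.length < n := by
    have := hmin _ hDec0
    simp at hL
    omega
  have hvr : Q.Reduced v := by
    intro M hM
    have := hr (M ++ u) (fun w => by rw [← hs w]; exact hM.congr _ (fun _ => rfl) w)
    rw [hL, List.length_append] at this
    omega
  have hur : Q.Reduced u := by
    intro M hM
    have := hr (v ++ M) (fun w => by
      rw [← hs w]; exact SameAct.congr Q (fun _ => rfl) hM w)
    rw [hL, List.length_append] at this
    omega
  have huc : Q.ICond u i := by
    intro M hM
    have := hc (v ++ M) (fun w => by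
      rw [SameAct.congr Q (fun _ => rfl) hM w, ← List.append_assoc]
      exact hs.congr _ (fun _ => rfl) w)
    rw [hL, List.length_append] at this
    omega
  have hvc : ∀ k, (k = i ∨ k = j) → Q.ICond v k := by
    intro k hk M hM
    by_contra hlt
    have hsame : Q.SameAct (M ++ k :: u) (L0 ++ [j]) := by
      intro w
      rw [← hs w, act_append, hM]
      simp [act_append, Q.refl_refl _ k.2]
    have h1 := hr _ hsame
    rw [hL, List.length_append, List.length_cons] at h1
    have := hmin M.length ⟨M, k :: u, rfl, by
      intro x hx
      rcases List.mem_cons.1 hx with rfl | hx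
      · exact hk
      · exact hu x hx, hsame, by simp; omega⟩
    omega
  obtain ⟨a, b, ha, hb, he⟩ := Q.dihedral i j hij u hu hur huc
  rw [← hs, act_append, he, act_add, act_smul, act_smul]
  have h1 := ih _ hvn v rfl hvr i (hvc i (Or.inl rfl))
  have h2 := ih _ hvn v rfl hvr j (hvc j (Or.inr rfl))
  exact add_nonneg (smul_nonneg ha h1) (smul_nonneg hb h2)

lemma exists_reduced (L : List Q.LF) : ∃ M, Q.SameAct M L ∧ Q.Reduced M := by
  classical
  have hex : ∃ m, ∃ M : List Q.LF, M.length = m ∧ Q.SameAct M L := ⟨_, L, rfl, fun _ => rfl⟩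
  obtain ⟨M, hM, hs⟩ := Nat.find_spec hex
  refine ⟨M, hs, fun N hN => ?_⟩
  rw [hM]
  exact Nat.find_min' hex ⟨N, rfl, fun v => by rw [hN v, hs v]⟩

lemma real_sign (L : List Q.LF) (i : Q.LF) :
    0 ≤ Q.act L (Q.ev i.1) ∨ Q.act L (Q.ev i.1) ≤ 0 := by
  obtain ⟨M, hs, hr⟩ := Q.exists_reduced L
  rw [← hs]
  by_cases hc : Q.ICond M i
  · left; exact Q.real_pos _ M rfl hr i hc
  · right
    unfold ICond at hc
    push Not at hc
    obtain ⟨N, hN, hlt⟩ := hc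
    obtain ⟨N', hN', hr'⟩ := Q.exists_reduced N
    have hlen := hr' N (fun v => (hN' v).symm)
    have hc' : Q.ICond N' i := by
      intro P hP
      have := hr P (fun v => by
        rw [hP v, act_append, hN', hN]
        simp [act_append, Q.refl_refl _ i.2])
      omega
    have h := Q.real_pos _ N' rfl hr' i hc'
    rw [hN', hN, act_append, act_cons, act_nil, Q.refl_ev_self _ i.2, act_neg] at h
    exact neg_nonneg.1 h

lemma imag_ge (α : Q.I → ℤ) (hα : ∀ i, Q.bil α (Q.ev i) ≤ 0) (L : List Q.LF) :
    α ≤ Q.act L α := by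
  obtain ⟨M, hs, hr⟩ := Q.exists_reduced L
  rw [← hs]
  clear hs L
  obtain ⟨n, hn⟩ : ∃ n, n = M.length := ⟨_, rfl⟩
  induction n generalizing M with
  | zero =>
    have : M = [] := List.length_eq_zero_iff.1 hn.symm
    subst this
    exact le_refl _
  | succ n ih =>
    rcases List.eq_nil_or_concat M with rfl | ⟨L0, j, rfl⟩
    · simp at hn
    rw [List.concat_eq_append] at *
    have hn' : n = L0.length := by simpa using hn
    have hr0 : Q.Reduced L0 := by
      intro N hN
      have := hr (N ++ [j]) (hN.congr _ (fun _ => rfl))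
      simpa using this
    have hc : Q.ICond L0 j := by
      intro N hN
      have := hr N hN
      simp at this
      omega
    have h1 := ih L0 hr0 hn'
    have h2 := Q.real_pos _ L0 rfl hr0 j hc
    rw [act_append, act_cons, act_nil]
    have h3 : Q.refl j.1 α = α + (- Q.bil α (Q.ev j.1)) • Q.ev j.1 := by
      unfold refl; module
    rw [h3, act_add, act_smul]
    exact h1.trans (le_add_of_nonneg_right (smul_nonneg (by have := hα j.1; omega) h2))

lemma root_form (α : Q.I → ℤ) (h : Q.IsRoot α) :
    (∃ L, ∃ i : Q.LF, α = Q.act L (Q.ev i.1)) ∨ (∃ L φ, Q.InFund φ ∧ α = Q.act L φ) ∨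
      (∃ L φ, Q.InFund φ ∧ α = - Q.act L φ) := by
  induction h with
  | simple i hi => exact Or.inl ⟨[], ⟨i, hi⟩, rfl⟩
  | fund α hα => exact Or.inr (Or.inl ⟨[], α, hα, rfl⟩)
  | neg_fund α hα => exact Or.inr (Or.inr ⟨[], α, hα, rfl⟩)
  | reflect i hi α _ ih =>
    rcases ih with ⟨L, j, h⟩ | ⟨L, φ, hφ, h⟩ | ⟨L, φ, hφ, h⟩
    · exact Or.inl ⟨⟨i, hi⟩ :: L, j, by rw [h]; rfl⟩
    · exact Or.inr (Or.inl ⟨⟨i, hi⟩ :: L, φ, hφ, by rw [h]; rfl⟩)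
    · refine Or.inr (Or.inr ⟨⟨i, hi⟩ :: L, φ, hφ, ?_⟩)
      rw [h, act_cons]
      have := Q.refl_smul i (-1) (Q.act L φ)
      simpa using this

lemma root_sign (α : Q.I → ℤ) (h : Q.IsRoot α) : 0 ≤ α ∨ α ≤ 0 := by
  rcases Q.root_form α h with ⟨L, j, rfl⟩ | ⟨L, φ, hφ, rfl⟩ | ⟨L, φ, hφ, rfl⟩
  · exact Q.real_sign L j
  · left
    exact le_trans (fun i => hφ.2.1 i) (Q.imag_ge φ hφ.2.2.2 L)
  · right
    exact neg_nonpos.2 (le_trans (fun i => hφ.2.1 i) (Q.imag_ge φ hφ.2.2.2 L))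

lemma fund_of_root (α : Q.I → ℤ) (h : Q.IsRoot α) (hα : ∀ i, 0 ≤ α i) (h0 : α ≠ 0)
    (hq : Q.bil α α = 0) (hle : ∀ i, Q.bil α (Q.ev i) ≤ 0) : Q.InFund α := by
  rcases Q.root_form α h with ⟨L, j, rfl⟩ | ⟨L, φ, hφ, rfl⟩ | ⟨L, φ, hφ, rfl⟩
  · rw [bil_act, Q.bil_ev_self _ j.2] at hq
    omega
  · have h1 := Q.imag_ge φ hφ.2.2.2 L
    have h2 := Q.imag_ge _ hle L.reverse
    rw [act_reverse] at h2
    rw [le_antisymm h2 h1]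
    exact hφ
  · exfalso
    have h1 := le_trans (fun i => hφ.2.1 i : 0 ≤ φ) (Q.imag_ge φ hφ.2.2.2 L)
    apply h0
    apply le_antisymm
    · exact neg_nonpos.2 h1
    · exact hα

end FinQuiver

namespace FinQuiver

variable (Q : FinQuiver)

lemma bil_sum (γ α : Q.I → ℤ) : Q.bil γ α = ∑ j, α j * Q.bil γ (Q.ev j) := by
  let f : (Q.I → ℤ) →ₗ[ℤ] ℤ :=
    { toFun := fun α => Q.bil γ α
      map_add' := fun a b => Q.bil_add_right a b γ
      map_smul' := fun c a => by simpa using Q.bil_smul_right c a γ }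
  have := f.pi_apply_eq_sum_univ α
  change Q.bil γ α = ∑ j, α j • Q.bil γ _ at this
  rw [this]
  refine Finset.sum_congr rfl fun j _ => ?_
  rw [smul_eq_mul]
  congr 2
  funext k
  simp [ev, eq_comm]

section
variable (K : Type) [Field K]

lemma pair_coRefl (i : Q.I) (l : Q.I → K) (α : Q.I → ℤ) :
    Q.pair K (Q.coRefl K i l) α = Q.pair K l (Q.refl i α) := by
  unfold pair coRefl
  have h1 : ∑ j, l j * ((Q.refl i α j : ℤ) : K)
      = (∑ j, l j * (α j : K)) - (Q.bil α (Q.ev i) : K) * l i := by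
    have : ∀ j, l j * ((Q.refl i α j : ℤ) : K)
        = l j * (α j : K) - (if j = i then (Q.bil α (Q.ev i) : K) * l i else 0) := by
      intro j
      by_cases h : j = i
      · subst h
        rw [refl_apply_self]; push_cast; simp; ring
      · rw [Q.refl_apply_ne _ _ h]; simp [h]
    rw [Finset.sum_congr rfl fun j _ => this j, Finset.sum_sub_distrib]
    simp
  rw [h1, Q.bil_symm, Q.bil_sum]
  push_cast
  rw [Finset.sum_mul, ← Finset.sum_sub_distrib]
  exact Finset.sum_congr rfl fun j _ => by ring

lemma coRefl_self (i : Q.I) (hi : Q.Loopfree i) (l : Q.I → K) : Q.coRefl K i l i = - l i := by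
  simp [coRefl, Q.bil_ev_self i hi]; ring

lemma coRefl_coRefl (i : Q.I) (hi : Q.Loopfree i) (l : Q.I → K) :
    Q.coRefl K i (Q.coRefl K i l) = l := by
  funext j
  have h := Q.coRefl_self K i hi l
  unfold coRefl at *
  rw [h]; ring

lemma pair_nsmul_ev (i : Q.I) (l : Q.I → K) (α : Q.I → ℤ) (h : ∀ j, j ≠ i → α j = 0) :
    Q.pair K l α = l i * α i := by
  unfold pair
  rw [Finset.sum_eq_single i]
  · intro j _ hj; simp [h j hj]
  · simp

lemma pos_of_root (α : Q.I → ℤ) (h : Q.IsRoot α) (j : Q.I) (hj : 0 < α j) : Q.IsPosRoot α := by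
  refine ⟨h, ?_, ?_⟩
  · rcases Q.root_sign α h with h | h
    · exact h
    · have := h j
      simp only [Pi.zero_apply] at this
      omega
  · rintro rfl; simp at hj

variable [CharZero K]

lemma Rplus_refl (i : Q.I) (hi : Q.Loopfree i) (l : Q.I → K) (hl : l i ≠ 0) (γ : Q.I → ℤ)
    (h : γ ∈ Q.Rplus K l) : Q.refl i γ ∈ Q.Rplus K (Q.coRefl K i l) := by
  obtain ⟨⟨hr, hp, h0⟩, hz⟩ := h
  refine ⟨?_, by rw [pair_coRefl, Q.refl_refl i hi, hz]⟩
  have : ∃ j, j ≠ i ∧ γ j ≠ 0 := by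
    by_contra hcon
    push Not at hcon
    rw [Q.pair_nsmul_ev K i l γ hcon] at hz
    have hg : γ i = 0 := by
      rcases mul_eq_zero.1 hz with h | h
      · exact (hl h).elim
      · exact_mod_cast h
    apply h0
    funext j
    by_cases hj : j = i
    · rw [hj, hg]; rfl
    · rw [hcon j hj]; rfl
  obtain ⟨j, hji, hj⟩ := this
  apply Q.pos_of_root _ (IsRoot.reflect i hi γ hr) j
  rw [Q.refl_apply_ne _ _ hji]
  exact lt_of_le_of_ne (hp j) (Ne.symm hj)

lemma pp_refl (i : Q.I) (hi : Q.Loopfree i) (α : Q.I → ℤ) : Q.pp (Q.refl i α) = Q.pp α := by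
  have h1 := Q.two_pp α
  have h2 := Q.two_pp (Q.refl i α)
  rw [Q.bil_refl i hi] at h2
  omega

lemma refl_sum (i : Q.I) {n : ℕ} (f : Fin n → Q.I → ℤ) :
    Q.refl i (∑ j, f j) = ∑ j, Q.refl i (f j) := by
  let g : (Q.I → ℤ) →+ (Q.I → ℤ) := AddMonoidHom.mk' (Q.refl i) (Q.refl_add i)
  exact map_sum g f Finset.univ

lemma Sigma_refl (i : Q.I) (hi : Q.Loopfree i) (l : Q.I → K) (hl : l i ≠ 0) (α : Q.I → ℤ)
    (h : α ∈ Q.SigmaSet K l) : Q.refl i α ∈ Q.SigmaSet K (Q.coRefl K i l) := by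
  refine ⟨Q.Rplus_refl K i hi l hl α h.1, ?_⟩
  intro n b hn hb he
  have hl' : Q.coRefl K i l i ≠ 0 := by rw [Q.coRefl_self K i hi]; simpa using hl
  have := h.2 n (fun j => Q.refl i (b j)) hn (fun j => by
    have := Q.Rplus_refl K i hi _ hl' _ (hb j)
    rwa [Q.coRefl_coRefl K i hi] at this) (by
    rw [← refl_sum, ← he, Q.refl_refl i hi])
  simp only [Q.pp_refl i hi] at this ⊢
  exact this

lemma bil_loop (α : Q.I → ℤ) (hα : ∀ i, 0 ≤ α i) (i : Q.I) (hi : ¬ Q.Loopfree i) :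
    Q.bil α (Q.ev i) ≤ 0 := by
  unfold Loopfree at hi
  push Not at hi
  obtain ⟨a, ha, hb⟩ := hi
  rw [bil_ev]
  have := Finset.single_le_sum (f := fun a : Q.A => ((if Q.t a = i then α (Q.h a) else 0)
    + (if Q.h a = i then α (Q.t a) else 0))) (s := Finset.univ) (fun b _ => by
      have h1 := hα (Q.h b)
      have h2 := hα (Q.t b)
      split_ifs <;> simp <;> omega) (Finset.mem_univ a)
  simp only [ha, hb, if_true] at this
  omega

lemma isRoot_simple_Rplus (i : Q.I) (hi : Q.Loopfree i) (l : Q.I → K) (hl : l i = 0) :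
    Q.ev i ∈ Q.Rplus K l := by
  refine ⟨⟨IsRoot.simple i hi, ?_, ?_⟩, ?_⟩
  · intro j; unfold ev; split_ifs <;> simp
  · intro h
    have := congrFun h i
    simp [ev] at this
  · rw [Q.pair_nsmul_ev K i l _ (fun j hj => by simp [ev, hj]), hl, zero_mul]

/-- if an isotropic element of `Σ_λ` pairs positively with `ε_i` then `λ_i ≠ 0`. -/
lemma adm_of_pos (i : Q.I) (hi : Q.Loopfree i) (l : Q.I → K) (α : Q.I → ℤ)
    (h : α ∈ Q.SigmaSet K l) (hp : Q.pp α = 1) (hpos : 0 < Q.bil α (Q.ev i)) : l i ≠ 0 := by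
  intro hl
  obtain ⟨⟨⟨hr, hp0, h0⟩, hz⟩, hS⟩ := h
  have hex : ∃ j, j ≠ i ∧ α j ≠ 0 := by
    by_contra hcon
    push Not at hcon
    have hq := Q.two_pp α
    rw [Q.bil_sum, Finset.sum_eq_single i (fun j _ hj => by simp [hcon j hj]) (by simp), hp] at hq
    have hai : α i = 0 := by
      have : α i * Q.bil α (Q.ev i) = 0 := by omega
      rcases mul_eq_zero.1 this with h | h
      · exact h
      · omega
    apply h0
    funext j
    by_cases hj : j = i
    · rw [hj, hai]; rfl
    · rw [hcon j hj]; rfl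
  obtain ⟨j, hji, hj⟩ := hex
  have hroot : Q.refl i α ∈ Q.Rplus K l := by
    refine ⟨Q.pos_of_root _ (IsRoot.reflect i hi α hr) j ?_, ?_⟩
    · rw [Q.refl_apply_ne _ _ hji]
      exact lt_of_le_of_ne (hp0 j) (Ne.symm hj)
    · rw [← pair_coRefl]
      have : Q.coRefl K i l = l := by funext j; simp [coRefl, hl]
      rw [this, hz]
  obtain ⟨m, hm⟩ : ∃ m : ℕ, (m : ℤ) = Q.bil α (Q.ev i) :=
    ⟨(Q.bil α (Q.ev i)).toNat, Int.toNat_of_nonneg hpos.le⟩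
  have hm1 : 1 ≤ m := by omega
  have := hS (m + 1) (Fin.cons (Q.refl i α) (fun _ => Q.ev i)) (by omega)
    (fun k => by
      refine Fin.cases ?_ (fun k => ?_) k
      · simpa using hroot
      · simpa using Q.isRoot_simple_Rplus K i hi l hl)
    (by
      rw [Fin.sum_univ_succ]
      simp only [Fin.cons_zero, Fin.cons_succ, Finset.sum_const, Finset.card_univ, Fintype.card_fin]
      rw [← natCast_zsmul, hm, refl]
      module)
  rw [Fin.sum_univ_succ] at this
  have hpe : Q.pp (Q.ev i) = 0 := by
    have := Q.two_pp (Q.ev i)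
    rw [Q.bil_ev_self i hi] at this
    omega
  simp only [Fin.cons_zero, Fin.cons_succ, Q.pp_refl i hi, hpe, hp] at this
  simp at this

end

/-! ### Positive semidefiniteness -/

lemma bil_squares (δ : Q.I → ℤ) (hpos : ∀ i, 0 < δ i) (hrad : ∀ i, Q.bil δ (Q.ev i) = 0)
    (α : Q.I → ℤ) : (Q.bil α α : ℚ) = ∑ a : Q.A, (δ (Q.h a) : ℚ) * δ (Q.t a) *
      ((α (Q.h a) : ℚ) / δ (Q.h a) - (α (Q.t a) : ℚ) / δ (Q.t a)) ^ 2 := by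
  have hne : ∀ i, (δ i : ℚ) ≠ 0 := fun i => by exact_mod_cast (hpos i).ne'
  have h1 : ∀ i, (α i : ℚ) ^ 2 / δ i * (∑ a : Q.A, ((if Q.t a = i then (δ (Q.h a) : ℚ) else 0)
      + (if Q.h a = i then (δ (Q.t a) : ℚ) else 0))) = 2 * α i * α i := by
    intro i
    have := hrad i
    rw [bil_ev, sub_eq_zero] at this
    have h2 : (∑ a : Q.A, ((if Q.t a = i then (δ (Q.h a) : ℚ) else 0)
      + (if Q.h a = i then (δ (Q.t a) : ℚ) else 0))) = 2 * δ i := by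
      have h3 := congrArg (fun z : ℤ => (z : ℚ)) this
      push_cast at h3
      rw [h3]
    rw [h2]
    have := hne i
    field_simp
  rw [bil_eq]
  push_cast
  rw [← Finset.sum_congr rfl fun i _ => h1 i]
  simp_rw [Finset.mul_sum]
  rw [Finset.sum_comm, ← Finset.sum_sub_distrib]
  refine Finset.sum_congr rfl fun a _ => ?_
  simp only [mul_add, Finset.sum_add_distrib, mul_ite, mul_zero, Finset.sum_ite_eq,
    Finset.mem_univ, if_true]
  have h2 := hne (Q.h a)
  have h3 := hne (Q.t a)
  field_simp
  ring

lemma posSemidef_of_rad (δ : Q.I → ℤ) (hpos : ∀ i, 0 < δ i) (hrad : ∀ i, Q.bil δ (Q.ev i) = 0) :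
    Q.PosSemidef := by
  intro α
  have h := Q.bil_squares δ hpos hrad α
  have : (0 : ℚ) ≤ Q.bil α α := by
    rw [h]
    apply Finset.sum_nonneg
    intro a _
    have h1 : (0 : ℚ) < δ (Q.h a) := by exact_mod_cast hpos _
    have h2 : (0 : ℚ) < δ (Q.t a) := by exact_mod_cast hpos _
    positivity
  exact_mod_cast this

lemma proportional_of_rad (hconn : Q.Connected) (δ : Q.I → ℤ) (hpos : ∀ i, 0 < δ i)
    (hrad : ∀ i, Q.bil δ (Q.ev i) = 0)
    (γ : Q.I → ℤ) (hγ : ∀ i, Q.bil γ (Q.ev i) = 0) (i j : Q.I) : γ i * δ j = γ j * δ i := by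
  have hne : ∀ i, (δ i : ℚ) ≠ 0 := fun i => by exact_mod_cast (hpos i).ne'
  have h := Q.bil_squares δ hpos hrad γ
  have h0 : Q.bil γ γ = 0 := by rw [bil_sum]; simp [hγ]
  rw [h0, Int.cast_zero, eq_comm, Finset.sum_eq_zero_iff_of_nonneg] at h
  swap
  · intro a _
    have h1 : (0 : ℚ) < δ (Q.h a) := by exact_mod_cast hpos _
    have h2 : (0 : ℚ) < δ (Q.t a) := by exact_mod_cast hpos _
    positivity
  have harr : ∀ a : Q.A, (γ (Q.h a) : ℚ) / δ (Q.h a) = (γ (Q.t a) : ℚ) / δ (Q.t a) := by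
    intro a
    have := h a (Finset.mem_univ a)
    rcases mul_eq_zero.1 this with h | h
    · rcases mul_eq_zero.1 h with h | h
      · exact (hne _ h).elim
      · exact (hne _ h).elim
    · exact sub_eq_zero.1 (pow_eq_zero_iff (two_ne_zero) |>.1 h)
  have hall : (γ i : ℚ) / δ i = (γ j : ℚ) / δ j := by
    have hc := hconn i j
    induction hc with
    | refl => rfl
    | tail _ hadj ih =>
      rw [ih]
      obtain ⟨a, ⟨h1, h2⟩ | ⟨h1, h2⟩⟩ := hadj
      · rw [← h1, ← h2, harr a]
      · rw [← h1, ← h2, harr a]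
  rw [div_eq_div_iff (hne i) (hne j)] at hall
  exact_mod_cast hall

/-! ### The support quiver -/

/-- extension by zero from the support quiver. -/
def extZ (β : Q.I → ℤ) (γ : (Q.suppQuiver β).I → ℤ) : Q.I → ℤ :=
  open Classical in fun i => if h : β i ≠ 0 then γ ⟨i, h⟩ else 0

lemma extZ_mem (β : Q.I → ℤ) (γ : (Q.suppQuiver β).I → ℤ) (i : (Q.suppQuiver β).I) :
    Q.extZ β γ i.1 = γ i := by
  have : β i.1 ≠ 0 := i.2
  simp only [extZ, this, dif_pos, ne_eq, not_false_eq_true]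
  rfl

lemma extZ_not (β : Q.I → ℤ) (γ : (Q.suppQuiver β).I → ℤ) (i : Q.I) (hi : β i = 0) :
    Q.extZ β γ i = 0 := by
  simp [extZ, hi]

lemma supp_bil (β : Q.I → ℤ) (α γ : (Q.suppQuiver β).I → ℤ) :
    (Q.suppQuiver β).bil α γ = Q.bil (Q.extZ β α) (Q.extZ β γ) := by
  classical
  rw [bil_eq, bil_eq]
  congr 1
  · have h1 := Finset.sum_subtype (p := fun i => β i ≠ 0) (F := (Q.suppQuiver β).fintypeI)
      (Finset.univ.filter fun i => β i ≠ 0)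
      (by simp) (fun i => 2 * Q.extZ β α i * Q.extZ β γ i)
    rw [Finset.sum_filter_of_ne] at h1
    · rw [h1]
      exact Finset.sum_congr rfl fun i _ => by
        rw [Q.extZ_mem β α i, Q.extZ_mem β γ i]
    · intro x _ hx hb
      apply hx
      rw [Q.extZ_not _ _ _ hb]; simp
  · have h1 := Finset.sum_subtype (p := fun a => β (Q.h a) ≠ 0 ∧ β (Q.t a) ≠ 0)
      (F := (Q.suppQuiver β).fintypeA)
      (Finset.univ.filter fun a => β (Q.h a) ≠ 0 ∧ β (Q.t a) ≠ 0)
      (by simp) (fun a => Q.extZ β α (Q.h a) * Q.extZ β γ (Q.t a)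
        + Q.extZ β α (Q.t a) * Q.extZ β γ (Q.h a))
    rw [Finset.sum_filter_of_ne] at h1
    · rw [h1]
      exact Finset.sum_congr rfl fun a _ => by
        rw [← Q.extZ_mem β α ((Q.suppQuiver β).h a), ← Q.extZ_mem β γ ((Q.suppQuiver β).h a),
          ← Q.extZ_mem β α ((Q.suppQuiver β).t a), ← Q.extZ_mem β γ ((Q.suppQuiver β).t a)]
        rfl
    · intro x _ hx
      constructor
      · intro hb
        apply hx
        rw [Q.extZ_not _ _ _ hb, Q.extZ_not _ _ _ hb]; simp
      · intro hb
        apply hx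
        rw [Q.extZ_not _ _ _ hb, Q.extZ_not _ _ _ hb]; simp

lemma extZ_ev (β : Q.I → ℤ) (i : (Q.suppQuiver β).I) :
    Q.extZ β ((Q.suppQuiver β).ev i) = Q.ev i.1 := by
  funext j
  by_cases hj : β j = 0
  · rw [Q.extZ_not _ _ _ hj]
    have : j ≠ i.1 := by
      rintro rfl
      exact i.2 hj
    simp [ev, this]
  · have := Q.extZ_mem β ((Q.suppQuiver β).ev i) ⟨j, hj⟩
    rw [this]
    unfold ev
    by_cases h : j = i.1
    · rw [if_pos h]
      exact if_pos (Subtype.ext h)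
    · rw [if_neg h]
      exact if_neg (fun h2 : (⟨j, hj⟩ : (Q.suppQuiver β).I) = i => h (congrArg Subtype.val h2))

lemma extZ_self (β : Q.I → ℤ) : Q.extZ β (fun i => β i.1) = β := by
  funext j
  by_cases hj : β j = 0
  · rw [Q.extZ_not _ _ _ hj, hj]
  · exact Q.extZ_mem β _ ⟨j, hj⟩

lemma supp_connected (β : Q.I → ℤ) (h : Q.SuppConnected β) : (Q.suppQuiver β).Connected := by
  intro i j
  have key : ∀ k, Relation.ReflTransGen (fun x y => β x ≠ 0 ∧ β y ≠ 0 ∧ Q.Adj x y) i.1 k →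
      ∀ hk : β k ≠ 0, Relation.ReflTransGen (Q.suppQuiver β).Adj i ⟨k, hk⟩ := by
    intro k hk
    induction hk with
    | refl => intro hk; exact Relation.ReflTransGen.refl
    | tail _ hadj ih =>
      intro hk
      obtain ⟨hb, hc, a, ha⟩ := hadj
      refine (ih hb).tail ?_
      rcases ha with ⟨h1, h2⟩ | ⟨h1, h2⟩
      · exact ⟨⟨a, by change β _ ≠ 0 ∧ β _ ≠ 0; rw [h1, h2]; exact ⟨hb, hc⟩⟩,
          Or.inl ⟨Subtype.ext h1, Subtype.ext h2⟩⟩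
      · exact ⟨⟨a, by change β _ ≠ 0 ∧ β _ ≠ 0; rw [h1, h2]; exact ⟨hc, hb⟩⟩,
          Or.inr ⟨Subtype.ext h1, Subtype.ext h2⟩⟩
  exact key j.1 (h i.1 j.1 i.2 j.2) j.2

/-- The final combinatorial statement: an isotropic element of `Σ_λ` with
`(β,ε_i) ≤ 0` for all `i` has extended Dynkin support and is the minimal imaginary root. -/
lemma extDynkin_of_fund (K : Type) [Field K] [CharZero K] (l : Q.I → K) (β : Q.I → ℤ)
    (h : β ∈ Q.SigmaSet K l) (hp : Q.pp β = 1) (hle : ∀ i, Q.bil β (Q.ev i) ≤ 0) :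
    (Q.suppQuiver β).IsExtDynkin ∧ (Q.suppQuiver β).IsMinImag (fun i => β i.1) := by
  obtain ⟨⟨⟨hr, hp0, h0⟩, hz⟩, hS⟩ := h
  have hq : Q.bil β β = 0 := by have := Q.two_pp β; omega
  have hF := Q.fund_of_root β hr hp0 h0 hq hle
  have hrad : ∀ i, β i ≠ 0 → Q.bil β (Q.ev i) = 0 := by
    rw [bil_sum] at hq
    have h1 : ∑ j, -(β j * Q.bil β (Q.ev j)) = 0 := by
      rw [Finset.sum_neg_distrib, hq, neg_zero]
    rw [Finset.sum_eq_zero_iff_of_nonneg] at h1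
    · intro i hi
      have := h1 i (Finset.mem_univ i)
      have h2 : β i * Q.bil β (Q.ev i) = 0 := by omega
      rcases mul_eq_zero.1 h2 with h | h
      · exact (hi h).elim
      · exact h
    · intro i _
      have h1 := hp0 i
      have h2 := hle i
      nlinarith
  have hpos : ∀ i : (Q.suppQuiver β).I, 0 < (fun i : (Q.suppQuiver β).I => β i.1) i :=
    fun i => lt_of_le_of_ne (hp0 i.1) (Ne.symm i.2)
  have hrad' : ∀ i, (Q.suppQuiver β).bil (fun i => β i.1) ((Q.suppQuiver β).ev i) = 0 := by
    intro i
    rw [supp_bil, extZ_ev, extZ_self]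
    exact hrad i.1 i.2
  have hconn := Q.supp_connected β hF.2.2.1
  have hne : (fun i : (Q.suppQuiver β).I => β i.1) ≠ 0 := by
    intro hh
    apply h0
    rw [← Q.extZ_self β]
    rw [hh]
    funext j
    by_cases hj : β j = 0
    · rw [Q.extZ_not _ _ _ hj]; rfl
    · exact Q.extZ_mem β _ ⟨j, hj⟩
  refine ⟨⟨hconn, (Q.suppQuiver β).posSemidef_of_rad _ hpos hrad', ?_⟩, ?_⟩
  · intro hpd
    apply hne
    apply hpd.2
    rw [supp_bil, extZ_self, hq]
  · refine ⟨fun i => (hpos i).le, hne, hrad', ?_⟩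
    intro γ hγ0 hγne hγ i0
    by_contra hlt
    push Not at hlt
    have hprop := (Q.suppQuiver β).proportional_of_rad hconn _ hpos hrad' γ hγ
    have hγi0 : 0 < γ i0 := by
      apply lt_of_le_of_ne (hγ0 i0)
      intro hh
      apply hγne
      funext j
      have h1 := hprop i0 j
      rw [← hh, zero_mul] at h1
      rcases mul_eq_zero.1 h1.symm with h | h
      · exact h
      · exact ((hpos i0).ne' h).elim
    -- common divisor
    obtain ⟨g, hg⟩ : ∃ g : ℤ, g = (Int.gcd (γ i0) (β i0.1) : ℤ) := ⟨_, rfl⟩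
    have hgpos : 0 < g := by
      have : 0 < Int.gcd (γ i0) (β i0.1) := Int.gcd_pos_of_ne_zero_left _ hγi0.ne'
      rw [hg]; exact_mod_cast this
    obtain ⟨x, hx⟩ : g ∣ γ i0 := hg ▸ Int.gcd_dvd_left ..
    obtain ⟨y, hy⟩ : g ∣ β i0.1 := hg ▸ Int.gcd_dvd_right ..
    have hcop : IsCoprime y x := by
      rw [Int.isCoprime_iff_gcd_eq_one]
      have h3 : Int.gcd (γ i0 / g) (β i0.1 / g) = 1 := by
        rw [hg]; exact Int.gcd_div_gcd_div_gcd (Int.gcd_pos_of_ne_zero_left _ hγi0.ne')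
      rw [hx, hy, Int.mul_ediv_cancel_left _ hgpos.ne', Int.mul_ediv_cancel_left _ hgpos.ne'] at h3
      rw [Int.gcd_comm]; exact h3
    have hβpos := hpos i0
    have hxpos : 0 < x := by
      by_contra hh; push Not at hh
      nlinarith
    have hxy : x < y := by
      by_contra hh; push Not at hh
      nlinarith
    have hdvd : ∀ j, y ∣ β j := by
      intro j
      by_cases hj : β j = 0
      · rw [hj]; exact dvd_zero _
      · have h1 := hprop i0 ⟨j, hj⟩
        simp only at h1
        rw [hx, hy] at h1
        have h2 : x * β j = y * γ ⟨j, hj⟩ := by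
          have : g * (x * β j) = g * (y * γ ⟨j, hj⟩) := by linarith
          exact mul_left_cancel₀ hgpos.ne' this
        exact hcop.dvd_of_dvd_mul_left ⟨_, h2⟩
    choose η hη using hdvd
    have hβη : β = y • η := by funext j; rw [hη j]; rfl
    have hypos : 0 < y := by omega
    have hηF : Q.InFund η := by
      refine ⟨?_, ?_, ?_, ?_⟩
      · rintro rfl
        apply h0; rw [hβη, smul_zero]
      · intro j
        have := hp0 j
        rw [hη j] at this
        exact nonneg_of_mul_nonneg_right this hypos
      · have hiff : ∀ j, β j ≠ 0 ↔ η j ≠ 0 := by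
          intro j; rw [hη j]; simp [hypos.ne']
        have := hF.2.2.1
        unfold SuppConnected at this ⊢
        simpa only [hiff] using this
      · intro j
        have := hle j
        rw [hβη, bil_smul_left] at this
        by_contra hh; push Not at hh
        nlinarith
    have hηR : η ∈ Q.Rplus K l := by
      refine ⟨⟨IsRoot.fund η hηF, hηF.2.1, hηF.1⟩, ?_⟩
      have h1 : (y : K) * Q.pair K l η = 0 := by
        rw [← hz, hβη]
        unfold pair
        rw [Finset.mul_sum]
        refine Finset.sum_congr rfl fun j _ => ?_
        simp; ring
      rcases mul_eq_zero.1 h1 with h | h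
      · have : y = 0 := by exact_mod_cast h
        omega
      · exact h
    have hpη : Q.pp η = 1 := by
      have h1 := Q.two_pp η
      have h2 : Q.bil η η = 0 := by
        rw [hβη, bil_smul_left, bil_smul_right] at hq
        rcases mul_eq_zero.1 hq with h | h
        · omega
        · rcases mul_eq_zero.1 h with h | h
          · omega
          · exact h
      omega
    obtain ⟨m, hm⟩ : ∃ m : ℕ, (m : ℤ) = y := ⟨y.toNat, Int.toNat_of_nonneg hypos.le⟩
    have := hS m (fun _ => η) (by omega) (fun _ => hηR) (by
      simp only [Finset.sum_const, Finset.card_univ, Fintype.card_fin]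
      rw [← natCast_zsmul, hm, hβη])
    rw [hp] at this
    simp [hpη] at this
    omega

end FinQuiver

namespace FinQuiver

section Corr

variable {K : Type} [Field K]

/-- Isomorphism of function algebras induced by a correspondence. -/
lemma corr_iso {X Y : Type} (S : Subalgebra K (X → K)) (S' : Subalgebra K (Y → K))
    (Γ : X → Y → Prop) (hl : ∀ x, ∃ y, Γ x y) (hr : ∀ y, ∃ x, Γ x y)
    (h1 : ∀ f ∈ S, ∃ f' ∈ S', ∀ x y, Γ x y → f x = f' y)
    (h2 : ∀ f' ∈ S', ∃ f ∈ S, ∀ x y, Γ x y → f x = f' y) : Nonempty (S ≃ₐ[K] S') := by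
  have h1' : ∀ f : S, ∃ f' : S', ∀ x y, Γ x y → f.1 x = f'.1 y := fun f => by
    obtain ⟨f', hf', h⟩ := h1 f.1 f.2
    exact ⟨⟨f', hf'⟩, h⟩
  choose F hF using h1'
  have huniq : ∀ (f' g' : S'), (∀ x y, Γ x y → f'.1 y = g'.1 y) → f' = g' := by
    intro f' g' h
    apply Subtype.ext
    funext y
    obtain ⟨x, hx⟩ := hr y
    exact h x y hx
  let φ : S →ₐ[K] S' :=
    { toFun := F
      map_one' := huniq _ _ fun x y h => by rw [← hF _ x y h]; rfl
      map_zero' := huniq _ _ fun x y h => by rw [← hF _ x y h]; rfl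
      map_mul' := fun f g => huniq _ _ fun x y h => by
        rw [← hF _ x y h]
        change f.1 x * g.1 x = (F f).1 y * (F g).1 y
        rw [← hF _ x y h, ← hF _ x y h]
      map_add' := fun f g => huniq _ _ fun x y h => by
        rw [← hF _ x y h]
        change f.1 x + g.1 x = (F f).1 y + (F g).1 y
        rw [← hF _ x y h, ← hF _ x y h]
      commutes' := fun r => huniq _ _ fun x y h => by rw [← hF _ x y h]; rfl }
  refine ⟨AlgEquiv.ofBijective φ ⟨?_, ?_⟩⟩
  · intro f g hfg
    apply Subtype.ext
    funext x
    obtain ⟨y, hy⟩ := hl x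
    rw [hF f x y hy, hF g x y hy]
    exact congrArg (fun z : S' => z.1 y) hfg
  · intro f'
    obtain ⟨f, hf, h⟩ := h2 f'.1 f'.2
    exact ⟨⟨f, hf⟩, huniq _ _ fun x y hxy => by rw [← h x y hxy]; exact (hF _ x y hxy).symm⟩

lemma transfer_adjoin {X Y : Type} {G : Set (X → K)} (S' : Subalgebra K (Y → K))
    (Γ : X → Y → Prop) (h : ∀ g ∈ G, ∃ f' ∈ S', ∀ x y, Γ x y → g x = f' y) :
    ∀ f ∈ Algebra.adjoin K G, ∃ f' ∈ S', ∀ x y, Γ x y → f x = f' y := by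
  intro f hf
  induction hf using Algebra.adjoin_induction with
  | mem g hg => exact h g hg
  | algebraMap r => exact ⟨algebraMap K _ r, S'.algebraMap_mem r, fun _ _ _ => rfl⟩
  | add f g _ _ hf hg =>
    obtain ⟨f', hf', h1⟩ := hf
    obtain ⟨g', hg', h2⟩ := hg
    exact ⟨f' + g', S'.add_mem hf' hg', fun x y hxy => by simp [h1 x y hxy, h2 x y hxy]⟩
  | mul f g _ _ hf hg =>
    obtain ⟨f', hf', h1⟩ := hf
    obtain ⟨g', hg', h2⟩ := hg
    exact ⟨f' * g', S'.mul_mem hf' hg', fun x y hxy => by simp [h1 x y hxy, h2 x y hxy]⟩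

lemma transfer_inv {X Y : Type} (R : X → X → Prop) (R' : Y → Y → Prop) (Γ : X → Y → Prop)
    (hR : ∀ y y', R' y y' → ∃ x x', Γ x y ∧ Γ x' y' ∧ R x x')
    (f : X → K) (hf : f ∈ relInv K R) (f' : Y → K) (h : ∀ x y, Γ x y → f x = f' y) :
    f' ∈ relInv K R' := by
  intro y y' hy
  obtain ⟨x, x', h1, h2, h3⟩ := hR y y' hy
  rw [← h x y h1, ← h x' y' h2]
  exact hf x x' h3

lemma inv_iso {X Y : Type} (G : Set (X → K)) (G' : Set (Y → K))
    (R : X → X → Prop) (R' : Y → Y → Prop) (Γ : X → Y → Prop)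
    (hl : ∀ x, ∃ y, Γ x y) (hr : ∀ y, ∃ x, Γ x y)
    (h1 : ∀ f ∈ Algebra.adjoin K G ⊓ relInv K R, ∃ f' ∈ Algebra.adjoin K G',
      ∀ x y, Γ x y → f x = f' y)
    (h2 : ∀ f' ∈ Algebra.adjoin K G' ⊓ relInv K R', ∃ f ∈ Algebra.adjoin K G,
      ∀ x y, Γ x y → f x = f' y)
    (hR : ∀ y y', R' y y' → ∃ x x', Γ x y ∧ Γ x' y' ∧ R x x')
    (hR' : ∀ x x', R x x' → ∃ y y', Γ x y ∧ Γ x' y' ∧ R' y y') :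
    Nonempty (↥(Algebra.adjoin K G ⊓ relInv K R) ≃ₐ[K] ↥(Algebra.adjoin K G' ⊓ relInv K R')) := by
  refine corr_iso _ _ Γ hl hr ?_ ?_
  · intro f hf
    obtain ⟨f', hf', h⟩ := h1 f hf
    exact ⟨f', ⟨hf', transfer_inv R R' Γ hR f hf.2 f' h⟩, h⟩
  · intro f' hf'
    obtain ⟨f, hf, h⟩ := h2 f' hf'
    exact ⟨f, ⟨hf, transfer_inv R' R (fun y x => Γ x y) hR' f' hf'.2 f
      (fun y x hxy => (h x y hxy).symm)⟩, h⟩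

end Corr

section Key

/-- A weak form of the Cauchy–Binet formula. -/
lemma sum_det_submatrix {R : Type*} [CommRing R] {D : Type*} [Fintype D] [DecidableEq D] {r : ℕ}
    (A : Matrix D (Fin r) R) (B : Matrix (Fin r) D R) :
    ∑ S : Fin r → D, ((A * B).submatrix S S).det = (r.factorial : R) * (B * A).det := by
  have h1 : ∀ τ : Equiv.Perm (Fin r), (B * A).det = ∑ S : Fin r → D,
      ((τ.sign : ℤ) : R) * (∏ i, A (S (τ i)) i) * (B.submatrix id S).det := by
    intro τ
    have h0 : (B * A).det = ∑ S : Fin r → D, (∏ i, A (S i) i) * (B.submatrix id S).det := by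
      simp only [Matrix.det_apply', Matrix.mul_apply, Finset.prod_univ_sum, Finset.mul_sum,
        Fintype.piFinset_univ]
      rw [Finset.sum_comm]
      refine Finset.sum_congr rfl fun S _ => Finset.sum_congr rfl fun σ _ => ?_
      rw [Finset.prod_mul_distrib]
      simp only [Matrix.submatrix_apply, id]
      ring
    rw [h0]
    refine Fintype.sum_equiv (Equiv.arrowCongr τ (Equiv.refl D)) _ _ fun S => ?_
    have h2 : B.submatrix id ((Equiv.arrowCongr τ (Equiv.refl D)) S)
        = (B.submatrix id S).submatrix id τ.symm := by
      ext i j; simp [Equiv.arrowCongr]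
    rw [h2, Matrix.det_permute']
    have h3 : ∀ i, (Equiv.arrowCongr τ (Equiv.refl D)) S (τ i) = S i := by
      intro i; simp [Equiv.arrowCongr]
    simp only [h3, Equiv.Perm.sign_symm]
    have h4 : ((τ.sign : ℤ) : R) * ((τ.sign : ℤ) : R) = 1 := by
      rw [← Int.cast_mul, ← Units.val_mul, Int.units_mul_self]; simp
    linear_combination (-(∏ i, A (S i) i) * (B.submatrix id S).det) * h4
  have h2 : (r.factorial : R) * (B * A).det = ∑ τ : Equiv.Perm (Fin r), (B * A).det := by
    simp [Fintype.card_perm]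
  rw [h2, Finset.sum_congr rfl fun τ _ => h1 τ, Finset.sum_comm]
  refine Finset.sum_congr rfl fun S _ => ?_
  have h3 : (A * B).submatrix S S = A.submatrix S id * B.submatrix id S := by
    ext i j; simp [Matrix.mul_apply]
  rw [h3, Matrix.det_mul, Matrix.det_apply', Finset.sum_mul]
  simp

variable {K : Type} [Field K] [CharZero K]

/-- The first fundamental theorem for `GL_r` in the special situation `BA = c·1`. -/
lemma key_inv {X ι D : Type} [Fintype D] [DecidableEq D] {r : ℕ} (c : K) (hc : c ≠ 0)
    (N : ι → X → K) (A : X → Matrix D (Fin r) K) (B : X → Matrix (Fin r) D K)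
    (hBA : ∀ x, B x * A x = c • (1 : Matrix (Fin r) (Fin r) K))
    (f : X → K)
    (hf : f ∈ Algebra.adjoin K (Set.range N ∪ (Set.range (fun (p : D × Fin r) x => A x p.1 p.2)
      ∪ Set.range (fun (p : Fin r × D) x => B x p.1 p.2))))
    (hinv : ∀ x (g g' : Matrix (Fin r) (Fin r) K), g * g' = 1 → ∃ y, (∀ k, N k y = N k x) ∧
      A y = A x * g' ∧ B y = g * B x ∧ f y = f x) :
    f ∈ Algebra.adjoin K (Set.range N ∪
      Set.range (fun (p : D × D) x => (A x * B x) p.1 p.2)) := by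
  set R := Algebra.adjoin K (Set.range N ∪
      Set.range (fun (p : D × D) x => (A x * B x) p.1 p.2)) with hR
  let PM : Matrix D D R := fun i j => ⟨fun x => (A x * B x) i j,
    Algebra.subset_adjoin (Or.inr ⟨(i, j), rfl⟩)⟩
  let evx : X → R →+* K := fun x => (Pi.evalRingHom (fun _ : X => K) x).comp R.val.toRingHom
  have evx_apply : ∀ x (g : R), evx x g = g.1 x := fun x g => rfl
  have hPM : ∀ x, (evx x).mapMatrix PM = A x * B x := by
    intro x; ext i j; rfl
  let d : (Fin r → D) → R := fun S => (PM.submatrix S S).det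
  have hd : ∀ S x, (d S).1 x = ((A x * B x).submatrix S S).det := by
    intro S x
    rw [← evx_apply, RingHom.map_det, ← hPM]
    rfl
  have hsplit : ∀ (S : Fin r → D) x, (A x * B x).submatrix S S
      = (A x).submatrix S id * (B x).submatrix id S := by
    intro S x; ext i j; simp [Matrix.mul_apply]
  let J : Ideal R :=
    { carrier := {g | (g : X → K) * f ∈ R}
      add_mem' := fun {a b} ha hb => by
        change ((a : X → K) + b) * f ∈ R
        rw [add_mul]; exact R.add_mem ha hb
      zero_mem' := by
        change ((0 : R) : X → K) * f ∈ R
        simp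
      smul_mem' := fun a b hb => by
        change ((a : X → K) * b) * f ∈ R
        rw [mul_assoc]; exact R.mul_mem a.2 hb }
  have hdrad : ∀ S, d S ∈ J.radical := by
    intro S
    have claim : ∀ f' ∈ Algebra.adjoin K (Set.range N ∪
        (Set.range (fun (p : D × Fin r) x => A x p.1 p.2)
          ∪ Set.range (fun (p : Fin r × D) x => B x p.1 p.2))),
        ∃ (n : ℕ) (h : R), ∀ x y (g' : Matrix (Fin r) (Fin r) K),
          (A x).submatrix S id * g' = 1 → (∀ k, N k y = N k x) →
          A y = A x * g' → B y = (A x).submatrix S id * B x →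
          (d S).1 x ^ n * f' y = h.1 x := by
      intro f' hf'
      induction hf' using Algebra.adjoin_induction with
      | mem g hg =>
        rcases hg with ⟨k, rfl⟩ | ⟨⟨e, k⟩, rfl⟩ | ⟨⟨k, e⟩, rfl⟩
        · refine ⟨0, ⟨N k, Algebra.subset_adjoin (Or.inl ⟨k, rfl⟩)⟩, ?_⟩
          intro x y g' _ hN _ _
          simp [hN]
        · refine ⟨1, (PM.submatrix id S * (PM.submatrix S S).adjugate) e k, ?_⟩
          intro x y g' hg' _ hA _
          have e1 : ((PM.submatrix id S * (PM.submatrix S S).adjugate) e k).1 x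
              = ((A x * B x).submatrix id S * ((A x * B x).submatrix S S).adjugate) e k := by
            rw [← hPM, ← evx_apply]
            have h1 : ((evx x).mapMatrix PM).submatrix S S
              = (evx x).mapMatrix (PM.submatrix S S) := rfl
            rw [h1, ← RingHom.map_adjugate]
            rw [Matrix.mul_apply, Matrix.mul_apply, map_sum]
            refine Finset.sum_congr rfl fun j _ => ?_
            rw [map_mul]; rfl
          rw [e1, hd]
          change _ * A y e k = _
          rw [hA, pow_one]
          have h2 : (A x * B x).submatrix id S = A x * (B x).submatrix id S := by
            ext i j; simp [Matrix.mul_apply]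
          rw [h2, hsplit, Matrix.adjugate_mul_distrib, Matrix.det_mul]
          have h3 : ((A x).submatrix S id).adjugate = ((A x).submatrix S id).det • g' := by
            have := congrArg (fun M => ((A x).submatrix S id).adjugate * M) hg'
            simp only [← Matrix.mul_assoc, Matrix.adjugate_mul, mul_one] at this
            rw [← this]; simp
          rw [h3, Matrix.mul_assoc, ← Matrix.mul_assoc ((B x).submatrix id S),
            Matrix.mul_adjugate]
          simp
          ring
        · refine ⟨0, PM (S k) e, ?_⟩
          intro x y g' _ _ _ hB
          simp only [hB, pow_zero, one_mul]
          change _ = (A x * B x) (S k) e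
          simp [Matrix.mul_apply]
      | algebraMap s =>
        exact ⟨0, algebraMap K R s, fun x y g' _ _ _ _ => by simp⟩
      | add f1 f2 _ _ h1 h2 =>
        obtain ⟨n1, g1, h1⟩ := h1
        obtain ⟨n2, g2, h2⟩ := h2
        refine ⟨n1 + n2, d S ^ n2 * g1 + d S ^ n1 * g2, fun x y g' a1 a2 a3 a4 => ?_⟩
        have e1 := h1 x y g' a1 a2 a3 a4
        have e2 := h2 x y g' a1 a2 a3 a4
        change (d S).1 x ^ (n1 + n2) * (f1 y + f2 y)
          = (d S).1 x ^ n2 * g1.1 x + (d S).1 x ^ n1 * g2.1 x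
        rw [← e1, ← e2]; ring
      | mul f1 f2 _ _ h1 h2 =>
        obtain ⟨n1, g1, h1⟩ := h1
        obtain ⟨n2, g2, h2⟩ := h2
        refine ⟨n1 + n2, g1 * g2, fun x y g' a1 a2 a3 a4 => ?_⟩
        have e1 := h1 x y g' a1 a2 a3 a4
        have e2 := h2 x y g' a1 a2 a3 a4
        change (d S).1 x ^ (n1 + n2) * (f1 y * f2 y) = g1.1 x * g2.1 x
        rw [← e1, ← e2]; ring
    obtain ⟨n, h, hh⟩ := claim f hf
    refine ⟨n + 1, ?_⟩
    change ((d S ^ (n + 1) : R) : X → K) * f ∈ R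
    have : ((d S ^ (n + 1) : R) : X → K) * f = ((d S * h : R) : X → K) := by
      funext x
      change (d S).1 x ^ (n + 1) * f x = (d S).1 x * h.1 x
      by_cases h0 : (d S).1 x = 0
      · rw [h0]; simp
      · have hdet : ((A x).submatrix S id).det ≠ 0 := by
          rw [hd, hsplit, Matrix.det_mul] at h0
          exact left_ne_zero_of_mul h0
        have hg : (A x).submatrix S id * ((A x).submatrix S id)⁻¹ = 1 :=
          Matrix.mul_nonsing_inv _ (isUnit_iff_ne_zero.2 hdet)
        obtain ⟨y, y1, y2, y3, y4⟩ := hinv x _ _ hg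
        have := hh x y _ hg y1 y2 y3
        rw [← this, y4]; ring
    rw [this]
    exact (d S * h).2
  have hunit : IsUnit (∑ S, d S) := by
    have : (∑ S, d S) = algebraMap K R ((r.factorial : K) * c ^ r) := by
      apply Subtype.ext
      funext x
      have e1 : (∑ S, d S).1 x = ∑ S, (d S).1 x := by
        rw [← evx_apply, map_sum]; rfl
      rw [e1, Finset.sum_congr rfl fun S _ => hd S x, sum_det_submatrix, hBA]
      simp
    rw [this]
    apply IsUnit.map
    rw [isUnit_iff_ne_zero]
    exact mul_ne_zero (by exact_mod_cast r.factorial_ne_zero) (pow_ne_zero _ hc)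
  have htop : J.radical = ⊤ :=
    Ideal.eq_top_of_isUnit_mem _ (Ideal.sum_mem _ fun S _ => hdrad S) hunit
  have h1 : (1 : R) ∈ J := by
    rw [Ideal.radical_eq_top] at htop
    rw [htop]; trivial
  have : ((1 : R) : X → K) * f ∈ R := h1
  simpa using this

/-- Complementary factorization of an idempotent. -/
lemma exists_compl {D : Type} [Fintype D] [DecidableEq D] {r r' : ℕ}
    (hD : Fintype.card D = r + r') (c : K) (hc : c ≠ 0)
    (A : Matrix D (Fin r) K) (B : Matrix (Fin r) D K) (hBA : B * A = c • 1) :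
    ∃ (A' : Matrix D (Fin r') K) (B' : Matrix (Fin r') D K),
      B' * A' = (-c) • 1 ∧ A' * B' = A * B - c • 1 := by
  have hsurj : Function.Surjective (Matrix.toLin' B) := by
    intro v
    refine ⟨c⁻¹ • A.mulVec v, ?_⟩
    rw [Matrix.toLin'_apply, Matrix.mulVec_smul, Matrix.mulVec_mulVec, hBA, Matrix.smul_mulVec,
      Matrix.one_mulVec, smul_smul, inv_mul_cancel₀ hc, one_smul]
  have hfr : Module.finrank K (LinearMap.ker (Matrix.toLin' B)) = r' := by
    have h1 := LinearMap.finrank_range_add_finrank_ker (Matrix.toLin' B)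
    rw [LinearMap.range_eq_top.2 hsurj, finrank_top] at h1
    simp only [Module.finrank_fintype_fun_eq_card, Fintype.card_fin, hD] at h1
    omega
  let b := Module.finBasisOfFinrankEq K (LinearMap.ker (Matrix.toLin' B)) hfr
  let E : (Fin r' → K) →ₗ[K] (D → K) :=
    (LinearMap.ker (Matrix.toLin' B)).subtype ∘ₗ b.equivFun.symm.toLinearMap
  let T : (D → K) →ₗ[K] (D → K) := Matrix.toLin' (A * B - c • 1)
  have hT : ∀ v, T v ∈ LinearMap.ker (Matrix.toLin' B) := by
    intro v
    rw [LinearMap.mem_ker]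
    change Matrix.toLin' B (Matrix.toLin' (A * B - c • 1) v) = 0
    rw [Matrix.toLin'_apply, Matrix.toLin'_apply, Matrix.mulVec_mulVec, Matrix.mul_sub,
      ← Matrix.mul_assoc, hBA]
    simp
  let F : (D → K) →ₗ[K] (Fin r' → K) :=
    b.equivFun.toLinearMap ∘ₗ T.codRestrict _ hT
  have hEF : E ∘ₗ F = T := by
    apply LinearMap.ext
    intro v
    change ((b.equivFun.symm (b.equivFun ⟨T v, hT v⟩)) : D → K) = T v
    rw [LinearEquiv.symm_apply_apply]
  have hEinj : Function.Injective E := by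
    intro v w h
    exact b.equivFun.symm.injective (Subtype.ext h)
  have hAB : LinearMap.toMatrix' E * LinearMap.toMatrix' F = A * B - c • 1 := by
    rw [← LinearMap.toMatrix'_comp, hEF]
    exact LinearMap.toMatrix'_toLin' _
  refine ⟨LinearMap.toMatrix' E, LinearMap.toMatrix' F, ?_, hAB⟩
  have hBE : Matrix.toLin' B ∘ₗ E = 0 := by
    apply LinearMap.ext
    intro v
    have : (b.equivFun.symm v : D → K) ∈ LinearMap.ker (Matrix.toLin' B) :=
      (b.equivFun.symm v).2
    exact this
  have hFE : F ∘ₗ E = (-c) • LinearMap.id := by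
    apply LinearMap.ext
    intro v
    apply hEinj
    have h1 : E (F (E v)) = T (E v) := LinearMap.congr_fun hEF (E v)
    have h2 : B.mulVec (E v) = 0 := LinearMap.congr_fun hBE v
    change E (F (E v)) = E ((-c) • v)
    rw [h1, map_smul]
    change Matrix.toLin' (A * B - c • 1) (E v) = _
    rw [Matrix.toLin'_apply, Matrix.sub_mulVec, ← Matrix.mulVec_mulVec, h2]
    simp [Matrix.smul_mulVec]
  rw [← LinearMap.toMatrix'_comp, hFE]
  simp

end Key

end FinQuiver

namespace FinQuiver

section Total

variable (Q : FinQuiver) (K : Type) [Field K]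

/-- Total-matrix version of the fibre of the moment map. -/
def TSet (l : Q.I → K) {T : Type} [Fintype T] [DecidableEq T] (π : T → Q.I) :
    Set (Q.DA → Matrix T T K) :=
  {M | (∀ a p q, M a p q ≠ 0 → π p = Q.dh a ∧ π q = Q.dt a) ∧
    (∑ a : Q.A, (M (Sum.inl a) * M (Sum.inr a) - M (Sum.inr a) * M (Sum.inl a)))
      = Matrix.diagonal fun p => l (π p)}

/-- Conjugation relation on total matrices. -/
def TRel {T : Type} [Fintype T] [DecidableEq T] (π : T → Q.I)
    (M1 M2 : Q.DA → Matrix T T K) : Prop :=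
  ∃ g g' : Matrix T T K, (∀ p q, g p q ≠ 0 → π p = π q) ∧ (∀ p q, g' p q ≠ 0 → π p = π q) ∧
    g * g' = 1 ∧ g' * g = 1 ∧ (∀ a, M2 a = (g * M1 a * g' : Matrix T T K))

def TG (l : Q.I → K) {T : Type} [Fintype T] [DecidableEq T] (π : T → Q.I) :
    Set (↥(Q.TSet K l π) → K) :=
  Set.range fun (c : Q.DA × T × T) (x : ↥(Q.TSet K l π)) => x.1 c.1 c.2.1 c.2.2

/-- Total-matrix version of the invariant ring. -/
def TInv (l : Q.I → K) {T : Type} [Fintype T] [DecidableEq T] (π : T → Q.I) :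
    Subalgebra K (↥(Q.TSet K l π) → K) :=
  Algebra.adjoin K (Q.TG K l π) ⊓ relInv K (fun x y => Q.TRel K π x.1 y.1)

variable {K}

/-- The total matrices of a representation. -/
def tot (α : Q.I → ℕ) (x : Q.Rep K α) : Q.DA → Matrix (Σ i, Fin (α i)) (Σ i, Fin (α i)) K :=
  fun a p q => if h : p.1 = Q.dh a ∧ q.1 = Q.dt a then
    x a (Fin.cast (congrArg α h.1) p.2) (Fin.cast (congrArg α h.2) q.2) else 0

/-- The representation with given total matrices. -/
def untot (α : Q.I → ℕ) (M : Q.DA → Matrix (Σ i, Fin (α i)) (Σ i, Fin (α i)) K) : Q.Rep K α :=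
  fun a p q => M a ⟨Q.dh a, p⟩ ⟨Q.dt a, q⟩

lemma untot_tot (α : Q.I → ℕ) (x : Q.Rep K α) : Q.untot α (Q.tot α x) = x := by
  funext a p q
  simp [untot, tot]

lemma tot_supp (α : Q.I → ℕ) (x : Q.Rep K α) (a p q) (h : Q.tot α x a p q ≠ 0) :
    p.1 = Q.dh a ∧ q.1 = Q.dt a := by
  by_contra h'
  exact h (by simp [tot, h'])

lemma supp_mul (α : Q.I → ℕ) (U V : Matrix (Σ i, Fin (α i)) (Σ i, Fin (α i)) K) (i0 j0 : Q.I)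
    (hU : ∀ p q, U p q ≠ 0 → p.1 = i0 ∧ q.1 = j0) (p q) :
    (U * V) p q = ∑ s : Fin (α j0), U p ⟨j0, s⟩ * V ⟨j0, s⟩ q := by
  rw [Matrix.mul_apply, Fintype.sum_sigma, Finset.sum_eq_single j0]
  · intro j _ hj
    refine Finset.sum_eq_zero fun s _ => ?_
    have : U p ⟨j, s⟩ = 0 := by
      by_contra h
      exact hj (hU _ _ h).2
    rw [this, zero_mul]
  · intro h; exact absurd (Finset.mem_univ _) h

lemma tot_moment (α : Q.I → ℕ) (M : Q.DA → Matrix (Σ i, Fin (α i)) (Σ i, Fin (α i)) K)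
    (hM : ∀ a p q, M a p q ≠ 0 → p.1 = Q.dh a ∧ q.1 = Q.dt a) (p q : Σ i, Fin (α i)) :
    (∑ a : Q.A, (M (Sum.inl a) * M (Sum.inr a) - M (Sum.inr a) * M (Sum.inl a))) p q
      = if h : q.1 = p.1 then
          Q.moment K α (Q.untot α M) p.1 p.2 (Fin.cast (congrArg α h) q.2) else 0 := by
  have key : ∀ (a b : Q.DA), Q.dh a = Q.dt b → Q.dt a = Q.dh b → (M a * M b) p q =
      if h : q.1 = p.1 then (if h' : Q.dh a = p.1 then
        ∑ s : Fin (α (Q.dt a)), M a ⟨Q.dh a, Fin.cast (congrArg α h').symm p.2⟩ ⟨Q.dt a, s⟩ *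
          M b ⟨Q.dt a, s⟩ ⟨Q.dh a, Fin.cast (congrArg α (h.trans h'.symm)) q.2⟩ else 0) else 0 := by
    intro a b hab hab'
    rw [Q.supp_mul α (M a) (M b) _ _ (hM a)]
    obtain ⟨i, p⟩ := p
    obtain ⟨j, q⟩ := q
    by_cases h' : Q.dh a = i
    · subst h'
      by_cases h : j = Q.dh a
      · subst h
        simp
      · simp only [h, dite_false]
        refine Finset.sum_eq_zero fun s _ => ?_
        have : M b ⟨Q.dt a, s⟩ ⟨j, q⟩ = 0 := by
          by_contra h2
          exact h ((hM _ _ _ h2).2.trans hab.symm)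
        rw [this, mul_zero]
    · simp only [h', dite_false, dite_eq_ite, ite_self]
      refine Finset.sum_eq_zero fun s _ => ?_
      have : M a ⟨i, p⟩ ⟨Q.dt a, s⟩ = 0 := by
        by_contra h2
        exact h' (hM _ _ _ h2).1.symm
      rw [this, zero_mul]
  rw [Matrix.sum_apply]
  simp only [Matrix.sub_apply]
  rw [Finset.sum_congr rfl fun a _ => congrArg₂ (· - ·)
    (key (Sum.inl a) (Sum.inr a) rfl rfl) (key (Sum.inr a) (Sum.inl a) rfl rfl)]
  by_cases h : q.1 = p.1
  · simp only [h, dite_true, moment]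
    rw [Finset.sum_sub_distrib, Matrix.sub_apply, Matrix.sum_apply, Matrix.sum_apply]
    congr 1
    · refine Finset.sum_congr rfl fun a _ => ?_
      by_cases h' : Q.h a = p.1
      · simp only [h', dite_true, Matrix.submatrix_apply, Matrix.mul_apply]
        rfl
      · simp only [h', dite_false, Matrix.zero_apply]
    · refine Finset.sum_congr rfl fun a _ => ?_
      by_cases h' : Q.t a = p.1
      · simp only [h', dite_true, Matrix.submatrix_apply, Matrix.mul_apply]
        rfl
      · simp only [h', dite_false, Matrix.zero_apply]
  · simp [h]

lemma tot_mem (l : Q.I → K) (α : Q.I → ℕ)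
    (M : Q.DA → Matrix (Σ i, Fin (α i)) (Σ i, Fin (α i)) K)
    (hM : ∀ a p q, M a p q ≠ 0 → p.1 = Q.dh a ∧ q.1 = Q.dt a) :
    M ∈ Q.TSet K l (Sigma.fst : (Σ i, Fin (α i)) → Q.I) ↔
      Q.untot α M ∈ Q.MomentFiber K l α := by
  constructor
  · rintro ⟨_, h⟩ i
    ext p q
    have := congrFun (congrFun h ⟨i, p⟩) ⟨i, q⟩
    rw [Q.tot_moment α M hM] at this
    simp only [dite_true] at this
    refine this.trans ?_
    by_cases hpq : p = q
    · subst hpq; simp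
    · rw [Matrix.diagonal_apply_ne]
      · simp [hpq]
      · intro h; exact hpq (eq_of_heq (Sigma.mk.inj h).2)
  · intro h
    refine ⟨hM, ?_⟩
    ext ⟨i, p⟩ ⟨j, q⟩
    rw [Q.tot_moment α M hM]
    by_cases hij : j = i
    · subst hij
      simp only [dite_true]
      rw [h j]
      by_cases hpq : p = q
      · subst hpq; simp
      · rw [Matrix.diagonal_apply_ne]
        · simp [hpq]
        · intro h; exact hpq (eq_of_heq (Sigma.mk.inj h).2)
    · simp only [hij, dite_false]
      rw [Matrix.diagonal_apply_ne]
      intro h; exact hij (Sigma.mk.inj h).1.symm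

lemma block_conj (α : Q.I → ℕ) (g g' : ∀ i, Matrix (Fin (α i)) (Fin (α i)) K)
    (M : Matrix (Σ i, Fin (α i)) (Σ i, Fin (α i)) K) (i j p q) :
    (Matrix.blockDiagonal' g * M * Matrix.blockDiagonal' g') ⟨i, p⟩ ⟨j, q⟩ =
      (g i * (Matrix.of fun p q => M ⟨i, p⟩ ⟨j, q⟩) * g' j) p q := by
  simp only [Matrix.mul_apply, Fintype.sum_sigma, Matrix.of_apply]
  rw [Finset.sum_eq_single j]
  · refine Finset.sum_congr rfl fun t _ => ?_
    rw [Matrix.blockDiagonal'_apply_eq, Finset.sum_eq_single i]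
    · simp [Matrix.blockDiagonal'_apply_eq]
    · intro k _ hk
      refine Finset.sum_eq_zero fun s _ => ?_
      rw [Matrix.blockDiagonal'_apply_ne _ _ _ hk.symm, zero_mul]
    · intro h; exact absurd (Finset.mem_univ _) h
  · intro k _ hk
    refine Finset.sum_eq_zero fun s _ => ?_
    rw [Matrix.blockDiagonal'_apply_ne _ _ _ hk, mul_zero]
  · intro h; exact absurd (Finset.mem_univ _) h

lemma block_eq (α : Q.I → ℕ) (g : Matrix (Σ i, Fin (α i)) (Σ i, Fin (α i)) K)
    (hg : ∀ p q, g p q ≠ 0 → p.1 = q.1) :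
    g = Matrix.blockDiagonal' fun i => (Matrix.of fun p q => g ⟨i, p⟩ ⟨i, q⟩) := by
  ext ⟨i, p⟩ ⟨j, q⟩
  by_cases h : i = j
  · subst h; rw [Matrix.blockDiagonal'_apply_eq]; rfl
  · rw [Matrix.blockDiagonal'_apply_ne _ _ _ h]
    by_contra h2; exact h (hg _ _ h2)

/-- The invariant ring in terms of total matrices. -/
lemma invRing_iso (l : Q.I → K) (α : Q.I → ℕ) :
    Nonempty (Q.InvRing K l α ≃ₐ[K] Q.TInv K l (Sigma.fst : (Σ i, Fin (α i)) → Q.I)) := by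
  have hfn : Q.fnRing K α (Q.MomentFiber K l α) = Algebra.adjoin K (Set.range
      (fun c : Q.Coords α => fun v : ↥(Q.MomentFiber K l α) => v.1 c.1 c.2.1 c.2.2)) := by
    rw [Algebra.adjoin_range_eq_range_aeval]; rfl
  unfold InvRing TInv
  rw [hfn]
  have tm : ∀ x : ↥(Q.MomentFiber K l α),
      Q.tot α x.1 ∈ Q.TSet K l (Sigma.fst : (Σ i, Fin (α i)) → Q.I) := by
    intro x
    rw [Q.tot_mem l α _ (Q.tot_supp α x.1), untot_tot]
    exact x.2
  have um : ∀ y : ↥(Q.TSet K l (Sigma.fst : (Σ i, Fin (α i)) → Q.I)),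
      Q.untot α y.1 ∈ Q.MomentFiber K l α := fun y => (Q.tot_mem l α _ y.2.1).1 y.2
  refine inv_iso _ _ _ _ (fun (x : ↥(Q.MomentFiber K l α))
    (y : ↥(Q.TSet K l (Sigma.fst : (Σ i, Fin (α i)) → Q.I))) => Q.untot α y.1 = x.1) ?_ ?_ ?_ ?_ ?_ ?_
  · exact fun x => ⟨⟨_, tm x⟩, Q.untot_tot α x.1⟩
  · exact fun y => ⟨⟨_, um y⟩, rfl⟩
  · rintro f ⟨hf, _⟩
    refine transfer_adjoin _ (fun (x : ↥(Q.MomentFiber K l α))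
      (y : ↥(Q.TSet K l (Sigma.fst : (Σ i, Fin (α i)) → Q.I))) => Q.untot α y.1 = x.1) ?_ f hf
    rintro _ ⟨⟨a, p, q⟩, rfl⟩
    refine ⟨_, Algebra.subset_adjoin ⟨(a, ⟨Q.dh a, p⟩, ⟨Q.dt a, q⟩), rfl⟩, ?_⟩
    intro x y hxy
    simp only [← hxy]
    rfl
  · rintro f ⟨hf, _⟩
    have := transfer_adjoin (Algebra.adjoin K (Set.range
      (fun c : Q.Coords α => fun v : ↥(Q.MomentFiber K l α) => v.1 c.1 c.2.1 c.2.2)))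
      (fun (y : ↥(Q.TSet K l (Sigma.fst : (Σ i, Fin (α i)) → Q.I)))
        (x : ↥(Q.MomentFiber K l α)) => Q.untot α y.1 = x.1) ?_ f hf
    · obtain ⟨f', hf', h⟩ := this
      exact ⟨f', hf', fun x y hxy => (h y x hxy).symm⟩
    rintro _ ⟨⟨a, ⟨i, p⟩, ⟨j, q⟩⟩, rfl⟩
    by_cases h : i = Q.dh a ∧ j = Q.dt a
    · obtain ⟨rfl, rfl⟩ := h
      refine ⟨_, Algebra.subset_adjoin ⟨⟨a, p, q⟩, rfl⟩, ?_⟩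
      intro y x hxy
      simp only [← hxy]
      rfl
    · refine ⟨0, Subalgebra.zero_mem _, ?_⟩
      intro y x _
      by_contra h2
      exact h (y.2.1 _ _ _ h2)
  · rintro y y' ⟨g, g', hg, hg', h1, h2, h3⟩
    refine ⟨⟨_, um y⟩, ⟨_, um y'⟩, rfl, rfl, ?_⟩
    rw [Q.block_eq α g hg, Q.block_eq α g' hg', ← Matrix.blockDiagonal'_mul,
      ← Matrix.blockDiagonal'_one] at h1 h2
    have h1' := congrFun (Matrix.blockDiagonal'_injective h1)
    have h2' := congrFun (Matrix.blockDiagonal'_injective h2)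
    refine ⟨fun i => ⟨_, _, h1' i, h2' i⟩, ?_⟩
    funext a
    ext p q
    change y'.1 a _ _ = _
    rw [h3]
    have e : (g * y.1 a * g') ⟨Q.dh a, p⟩ ⟨Q.dt a, q⟩ =
        ((Matrix.blockDiagonal' fun i => (Matrix.of fun p q => g ⟨i, p⟩ ⟨i, q⟩)) * y.1 a *
        (Matrix.blockDiagonal' fun i => (Matrix.of fun p q => g' ⟨i, p⟩ ⟨i, q⟩)))
          ⟨Q.dh a, p⟩ ⟨Q.dt a, q⟩ := by
      rw [← Q.block_eq α g hg, ← Q.block_eq α g' hg']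
    refine e.trans ?_
    rw [block_conj]
    rfl
  · rintro x x' ⟨g, hg⟩
    refine ⟨⟨_, tm x⟩, ⟨_, tm x'⟩, Q.untot_tot α x.1, Q.untot_tot α x'.1,
      Matrix.blockDiagonal' fun i => (g i).1, Matrix.blockDiagonal' fun i => ((g i)⁻¹).1,
      ?_, ?_, ?_, ?_, ?_⟩
    · rintro ⟨i, p⟩ ⟨j, q⟩ h
      by_contra h2
      exact h (Matrix.blockDiagonal'_apply_ne _ _ _ h2)
    · rintro ⟨i, p⟩ ⟨j, q⟩ h
      by_contra h2
      exact h (Matrix.blockDiagonal'_apply_ne _ _ _ h2)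
    · rw [← Matrix.blockDiagonal'_mul, ← Matrix.blockDiagonal'_one]
      congr 1; funext i; exact (g i).3
    · rw [← Matrix.blockDiagonal'_mul, ← Matrix.blockDiagonal'_one]
      congr 1; funext i; exact (g i).4
    · intro a
      ext ⟨i, p⟩ ⟨j, q⟩
      rw [block_conj]
      by_cases h : i = Q.dh a ∧ j = Q.dt a
      · obtain ⟨rfl, rfl⟩ := h
        have e1 : (Matrix.of fun p q => Q.tot α x.1 a ⟨Q.dh a, p⟩ ⟨Q.dt a, q⟩) = x.1 a :=
          congrFun (Q.untot_tot α x.1) a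
        have e2 : Q.tot α x'.1 a ⟨Q.dh a, p⟩ ⟨Q.dt a, q⟩ = x'.1 a p q :=
          congrFun (congrFun (congrFun (Q.untot_tot α x'.1) a) p) q
        rw [e1]
        refine e2.trans ?_
        rw [hg]
        rfl
      · have e1 : (Matrix.of fun p q => Q.tot α x.1 a ⟨i, p⟩ ⟨j, q⟩) = 0 := by
          ext p q; simp [tot, h]
        rw [e1]
        simp [tot, h]

end Total

end FinQuiver

namespace FinQuiver

section Transfer

variable (Q Q' : FinQuiver) {K : Type} [Field K]

/-- Transfer of total-matrix invariant rings along an embedding of quivers. -/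
lemma tinv_transfer (l : Q.I → K) {T T' : Type} [Fintype T] [DecidableEq T] [Fintype T']
    [DecidableEq T'] (π : T → Q.I) (π' : T' → Q'.I) (ιI : Q'.I → Q.I) (ιA : Q'.A → Q.A)
    (hI : Function.Injective ιI) (hA : Function.Injective ιA)
    (hh : ∀ a, Q.h (ιA a) = ιI (Q'.h a)) (ht : ∀ a, Q.t (ιA a) = ιI (Q'.t a))
    (e : T' ≃ T) (he : ∀ p, π (e p) = ιI (π' p))
    (hout : ∀ a : Q.A, (∃ p, π p = Q.h a) → (∃ p, π p = Q.t a) → a ∈ Set.range ιA) :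
    Nonempty (Q.TInv K l π ≃ₐ[K] Q'.TInv K (fun i => l (ιI i)) π') := by
  set ιD : Q'.DA → Q.DA := Sum.map ιA ιA with hιD
  have hD : Function.Injective ιD := Sum.map_injective.2 ⟨hA, hA⟩
  have hdh : ∀ a, Q.dh (ιD a) = ιI (Q'.dh a) := by rintro (a | a) <;> simp [ιD, hh, ht]
  have hdt : ∀ a, Q.dt (ιD a) = ιI (Q'.dt a) := by rintro (a | a) <;> simp [ιD, hh, ht]
  have hzero : ∀ M : Q.DA → Matrix T T K, (∀ a p q, M a p q ≠ 0 → π p = Q.dh a ∧ π q = Q.dt a) →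
      ∀ a, a ∉ Set.range ιD → M a = 0 := by
    intro M hM a ha
    ext p q
    by_contra h
    obtain ⟨h1, h2⟩ := hM a p q h
    apply ha
    rcases a with a | a
    · obtain ⟨b, rfl⟩ := hout a ⟨p, h1⟩ ⟨q, h2⟩
      exact ⟨Sum.inl b, rfl⟩
    · obtain ⟨b, rfl⟩ := hout a ⟨q, h2⟩ ⟨p, h1⟩
      exact ⟨Sum.inr b, rfl⟩
  let pull : (Q.DA → Matrix T T K) → (Q'.DA → Matrix T' T' K) :=
    fun M a => (M (ιD a)).submatrix e e
  have hmom : ∀ M : Q.DA → Matrix T T K,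
      (∀ a p q, M a p q ≠ 0 → π p = Q.dh a ∧ π q = Q.dt a) →
      (∑ a : Q'.A, (pull M (Sum.inl a) * pull M (Sum.inr a)
        - pull M (Sum.inr a) * pull M (Sum.inl a)))
      = (∑ a : Q.A, (M (Sum.inl a) * M (Sum.inr a)
        - M (Sum.inr a) * M (Sum.inl a))).submatrix e e := by
    intro M hM
    have h1 : (∑ a : Q'.A, (M (Sum.inl (ιA a)) * M (Sum.inr (ιA a))
        - M (Sum.inr (ιA a)) * M (Sum.inl (ιA a))))
      = ∑ a : Q.A, (M (Sum.inl a) * M (Sum.inr a) - M (Sum.inr a) * M (Sum.inl a)) := by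
      refine Fintype.sum_of_injective ιA hA _ _ ?_ fun _ => rfl
      intro a ha
      rw [hzero M hM (Sum.inl a)]
      · simp
      · rintro ⟨b | b, hb⟩
        · exact ha ⟨b, Sum.inl.inj hb⟩
        · exact absurd hb (by simp [ιD])
    rw [← h1]
    ext p q
    simp only [Matrix.submatrix_apply, Matrix.sum_apply, Matrix.sub_apply]
    refine Finset.sum_congr rfl fun a _ => ?_
    simp only [pull, Matrix.submatrix_mul_equiv, Matrix.submatrix_apply]
    rfl
  have hpull : ∀ M ∈ Q.TSet K l π, pull M ∈ Q'.TSet K (fun i => l (ιI i)) π' := by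
    rintro M ⟨h1, h2⟩
    refine ⟨?_, ?_⟩
    · intro a p q h
      obtain ⟨h3, h4⟩ := h1 _ _ _ h
      rw [he, hdh] at h3
      rw [he, hdt] at h4
      exact ⟨hI h3, hI h4⟩
    · rw [hmom M h1, h2]
      ext p q
      simp only [Matrix.submatrix_apply, Matrix.diagonal_apply, e.injective.eq_iff, he]
  let push : (Q'.DA → Matrix T' T' K) → (Q.DA → Matrix T T K) := fun M =>
    Function.extend ιD (fun a => (M a).submatrix e.symm e.symm) 0
  have hpp : ∀ M, pull (push M) = M := by
    intro M
    funext a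
    change ((push M) (ιD a)).submatrix e e = _
    rw [show push M (ιD a) = (M a).submatrix e.symm e.symm from hD.extend_apply _ _ a]
    ext p q; simp
  have hpush : ∀ M ∈ Q'.TSet K (fun i => l (ιI i)) π', push M ∈ Q.TSet K l π := by
    rintro M ⟨h1, h2⟩
    have h3 : ∀ a p q, push M a p q ≠ 0 → π p = Q.dh a ∧ π q = Q.dt a := by
      intro a p q h
      by_cases ha : a ∈ Set.range ιD
      · obtain ⟨a, rfl⟩ := ha
        rw [show push M (ιD a) = (M a).submatrix e.symm e.symm from hD.extend_apply _ _ a] at h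
        obtain ⟨h4, h5⟩ := h1 _ _ _ h
        rw [hdh, hdt, ← h4, ← h5, ← he, ← he]
        simp
      · exact absurd (show push M a p q = 0 by
          rw [show push M a = 0 from Function.extend_apply' _ _ _ ha]; rfl) h
    refine ⟨h3, ?_⟩
    have h4 := hmom (push M) h3
    rw [hpp, h2] at h4
    ext p q
    have h5 := congrFun (congrFun h4 (e.symm p)) (e.symm q)
    rw [Matrix.submatrix_apply, e.apply_symm_apply, e.apply_symm_apply] at h5
    rw [← h5]
    simp only [Matrix.diagonal_apply, e.symm.injective.eq_iff, ← he, e.apply_symm_apply]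
  refine inv_iso _ _ _ _ (fun (x : ↥(Q.TSet K l π))
    (y : ↥(Q'.TSet K (fun i => l (ιI i)) π')) => pull x.1 = y.1) ?_ ?_ ?_ ?_ ?_ ?_
  · exact fun x => ⟨⟨_, hpull x.1 x.2⟩, rfl⟩
  · exact fun y => ⟨⟨_, hpush y.1 y.2⟩, hpp _⟩
  · rintro f ⟨hf, _⟩
    refine transfer_adjoin _ (fun (x : ↥(Q.TSet K l π))
      (y : ↥(Q'.TSet K (fun i => l (ιI i)) π')) => pull x.1 = y.1) ?_ f hf
    rintro _ ⟨⟨a, p, q⟩, rfl⟩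
    by_cases ha : a ∈ Set.range ιD
    · obtain ⟨a, rfl⟩ := ha
      refine ⟨_, Algebra.subset_adjoin ⟨(a, e.symm p, e.symm q), rfl⟩, ?_⟩
      intro x y hxy
      simp only [← hxy]
      simp [pull]
    · refine ⟨0, Subalgebra.zero_mem _, ?_⟩
      intro x y _
      change x.1 a p q = 0
      rw [hzero x.1 x.2.1 a ha]; rfl
  · rintro f ⟨hf, _⟩
    have := transfer_adjoin (Algebra.adjoin K (Q.TG K l π))
      (fun (y : ↥(Q'.TSet K (fun i => l (ιI i)) π')) (x : ↥(Q.TSet K l π)) =>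
        pull x.1 = y.1) ?_ f hf
    · obtain ⟨f', hf', h⟩ := this
      exact ⟨f', hf', fun x y hxy => (h y x hxy).symm⟩
    rintro _ ⟨⟨a, p, q⟩, rfl⟩
    refine ⟨_, Algebra.subset_adjoin ⟨(ιD a, e p, e q), rfl⟩, ?_⟩
    intro y x hxy
    simp only [← hxy]
    rfl
  · rintro y y' ⟨g, g', hg, hg', h1, h2, h3⟩
    refine ⟨⟨_, hpush y.1 y.2⟩, ⟨_, hpush y'.1 y'.2⟩, hpp _, hpp _,
      g.submatrix e.symm e.symm, g'.submatrix e.symm e.symm, ?_, ?_, ?_, ?_, ?_⟩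
    · intro p q h
      have := hg _ _ h
      rw [← e.apply_symm_apply p, ← e.apply_symm_apply q, he, he, this]
    · intro p q h
      have := hg' _ _ h
      rw [← e.apply_symm_apply p, ← e.apply_symm_apply q, he, he, this]
    · rw [Matrix.submatrix_mul_equiv, h1, Matrix.submatrix_one_equiv]
    · rw [Matrix.submatrix_mul_equiv, h2, Matrix.submatrix_one_equiv]
    · intro a
      by_cases ha : a ∈ Set.range ιD
      · obtain ⟨a, rfl⟩ := ha
        change push y'.1 (ιD a) = _ * push y.1 (ιD a) * _
        rw [show push y'.1 (ιD a) = (y'.1 a).submatrix e.symm e.symm from hD.extend_apply _ _ a,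
          show push y.1 (ιD a) = (y.1 a).submatrix e.symm e.symm from hD.extend_apply _ _ a,
          h3, Matrix.submatrix_mul_equiv, Matrix.submatrix_mul_equiv]
      · change push y'.1 a = _ * push y.1 a * _
        rw [show push y'.1 a = 0 from Function.extend_apply' _ _ _ ha,
          show push y.1 a = 0 from Function.extend_apply' _ _ _ ha]
        simp
  · rintro x x' ⟨g, g', hg, hg', h1, h2, h3⟩
    refine ⟨⟨_, hpull x.1 x.2⟩, ⟨_, hpull x'.1 x'.2⟩, rfl, rfl,
      g.submatrix e e, g'.submatrix e e, ?_, ?_, ?_, ?_, ?_⟩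
    · intro p q h
      have := hg _ _ h
      rw [he, he] at this
      exact hI this
    · intro p q h
      have := hg' _ _ h
      rw [he, he] at this
      exact hI this
    · rw [Matrix.submatrix_mul_equiv, h1, Matrix.submatrix_one_equiv]
    · rw [Matrix.submatrix_mul_equiv, h2, Matrix.submatrix_one_equiv]
    · intro a
      change (x'.1 (ιD a)).submatrix e e = _ * (x.1 (ιD a)).submatrix e e * _
      rw [h3, Matrix.submatrix_mul_equiv, Matrix.submatrix_mul_equiv]

/-- Passing to the support quiver does not change the invariant ring. -/
lemma supp_iso (l : Q.I → K) (β : Q.I → ℤ) :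
    Nonempty (Q.InvRing K l (fun i => (β i).toNat) ≃ₐ[K]
      (Q.suppQuiver β).InvRing K (fun i => l i.1) (fun i => (β i.1).toNat)) := by
  obtain ⟨φ⟩ := Q.invRing_iso l (fun i => (β i).toNat)
  obtain ⟨ψ⟩ := (Q.suppQuiver β).invRing_iso (fun i => l i.1) (fun i => (β i.1).toNat)
  have hb : ∀ p : (Σ i, Fin ((β i).toNat)), β p.1 ≠ 0 := by
    rintro ⟨i, p⟩ h
    have := p.2
    simp only at h
    omega
  let e : (Σ i : (Q.suppQuiver β).I, Fin ((β i.1).toNat)) ≃ (Σ i, Fin ((β i).toNat)) :=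
    { toFun := fun p => ⟨p.1.1, p.2⟩
      invFun := fun p => ⟨⟨p.1, hb p⟩, p.2⟩
      left_inv := fun p => rfl
      right_inv := fun p => rfl }
  obtain ⟨χ⟩ := Q.tinv_transfer (Q.suppQuiver β) l
    (Sigma.fst : (Σ i, Fin ((β i).toNat)) → Q.I)
    (Sigma.fst : (Σ i : (Q.suppQuiver β).I, Fin ((β i.1).toNat)) → (Q.suppQuiver β).I)
    (fun i => i.1) (fun a => a.1) Subtype.val_injective Subtype.val_injective
    (fun _ => rfl) (fun _ => rfl) e (fun _ => rfl) (by
      rintro a ⟨p, hp⟩ ⟨q, hq⟩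
      exact ⟨⟨a, by rw [← hp]; exact hb p, by rw [← hq]; exact hb q⟩, rfl⟩)
  exact ⟨(φ.trans χ).trans ψ.symm⟩

end Transfer

end FinQuiver

namespace FinQuiver

set_option linter.unusedSectionVars false

section Reflection

lemma sum_sub {ι M : Type*} [Fintype ι] [AddCommMonoid M] (P : ι → Prop) [Fintype {p // P p}]
    (F : ι → M) (h : ∀ p, ¬ P p → F p = 0) : ∑ p : {p // P p}, F p.1 = ∑ p, F p := by
  refine Fintype.sum_of_injective (fun p : {p // P p} => p.1) Subtype.val_injective _ _ ?_
    fun _ => rfl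
  intro p hp
  exact h p fun h' => hp ⟨⟨p, h'⟩, rfl⟩

lemma blk_mul {K o k : Type*} {m : o → Type*} [CommRing K] [Fintype o] [DecidableEq o]
    [∀ i, Fintype (m i)] (u : ∀ i, Matrix (m i) (m i) K) (X : Matrix (Σ i, m i) k K) (i p q) :
    (Matrix.blockDiagonal' u * X) ⟨i, p⟩ q = ∑ s, u i p s * X ⟨i, s⟩ q := by
  rw [Matrix.mul_apply, Fintype.sum_sigma, Finset.sum_eq_single i]
  · simp [Matrix.blockDiagonal'_apply_eq]
  · intro j _ hj
    refine Finset.sum_eq_zero fun s _ => ?_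
    rw [Matrix.blockDiagonal'_apply_ne _ _ _ hj.symm, zero_mul]
  · intro h; exact absurd (Finset.mem_univ _) h

lemma mul_blk {K o k : Type*} {m : o → Type*} [CommRing K] [Fintype o] [DecidableEq o]
    [∀ i, Fintype (m i)] (u : ∀ i, Matrix (m i) (m i) K) (X : Matrix k (Σ i, m i) K) (i p q) :
    (X * Matrix.blockDiagonal' u) q ⟨i, p⟩ = ∑ s, X q ⟨i, s⟩ * u i s p := by
  rw [Matrix.mul_apply, Fintype.sum_sigma, Finset.sum_eq_single i]
  · simp [Matrix.blockDiagonal'_apply_eq]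
  · intro j _ hj
    refine Finset.sum_eq_zero fun s _ => ?_
    rw [Matrix.blockDiagonal'_apply_ne _ _ _ hj, mul_zero]
  · intro h; exact absurd (Finset.mem_univ _) h

variable (Q : FinQuiver) {K : Type} [Field K]

lemma TSet_conj (l : Q.I → K) {T : Type} [Fintype T] [DecidableEq T] (π : T → Q.I)
    (M : Q.DA → Matrix T T K) (hM : M ∈ Q.TSet K l π) (g g' : Matrix T T K)
    (hg : ∀ p q, g p q ≠ 0 → π p = π q) (hg' : ∀ p q, g' p q ≠ 0 → π p = π q)
    (h1 : g * g' = 1) (h2 : g' * g = 1) : (fun a => g * M a * g') ∈ Q.TSet K l π := by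
  refine ⟨?_, ?_⟩
  · intro a p q h
    change (g * M a * g') p q ≠ 0 at h
    rw [Matrix.mul_apply] at h
    obtain ⟨t, _, ht⟩ := Finset.exists_ne_zero_of_sum_ne_zero h
    have ht1 := left_ne_zero_of_mul ht
    have ht2 := right_ne_zero_of_mul ht
    rw [Matrix.mul_apply] at ht1
    obtain ⟨s, _, hs⟩ := Finset.exists_ne_zero_of_sum_ne_zero ht1
    have h3 := hM.1 _ _ _ (right_ne_zero_of_mul hs)
    exact ⟨(hg _ _ (left_ne_zero_of_mul hs)).trans h3.1, (hg' _ _ ht2).symm.trans h3.2⟩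
  · have h3 : ∀ U V : Matrix T T K, (g * U * g') * (g * V * g') = g * (U * V) * g' := by
      intro U V
      calc (g * U * g') * (g * V * g') = g * U * (g' * g) * V * g' := by
            simp only [Matrix.mul_assoc]
        _ = _ := by rw [h2, Matrix.mul_one]; simp only [Matrix.mul_assoc]
    simp only [h3, ← Matrix.sub_mul, ← Matrix.mul_sub]
    rw [← Matrix.sum_mul, ← Matrix.mul_sum, hM.2]
    have h4 : g * (Matrix.diagonal fun p => l (π p)) = (Matrix.diagonal fun p => l (π p)) * g := by
      ext p q
      rw [Matrix.mul_diagonal, Matrix.diagonal_mul]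
      by_cases h : g p q = 0
      · simp [h]
      · rw [hg p q h, mul_comm]
    rw [h4, Matrix.mul_assoc, h1, Matrix.mul_one]

variable [DecidableEq Q.A] (i : Q.I) {T0 : Type} [Fintype T0] [DecidableEq T0] (π0 : T0 → Q.I)

/-- Index set of the total space around the vertex `i`. -/
abbrev DI : Type := Σ b : {b : Q.DA // Q.dt b = i}, {p : T0 // π0 p = Q.dh b.1}

/-- The sign of an arrow. -/
def sg (K : Type) [Field K] : Q.DA → K := Sum.elim (fun _ => 1) (fun _ => -1)

/-- The vertex function on the split index set. -/
abbrev piS (r : ℕ) : T0 ⊕ Fin r → Q.I := Sum.elim π0 (fun _ => i)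

variable {r : ℕ}

def Am (M : Q.DA → Matrix (T0 ⊕ Fin r) (T0 ⊕ Fin r) K) : Matrix (Q.DI i π0) (Fin r) K :=
  Matrix.of fun d k => M d.1.1 (Sum.inl d.2.1) (Sum.inr k)

def Bm (M : Q.DA → Matrix (T0 ⊕ Fin r) (T0 ⊕ Fin r) K) : Matrix (Fin r) (Q.DI i π0) K :=
  Matrix.of fun k d => - Q.sg K d.1.1 * M (Sum.swap d.1.1) (Sum.inr k) (Sum.inl d.2.1)

def Nm (M : Q.DA → Matrix (T0 ⊕ Fin r) (T0 ⊕ Fin r) K) : Q.DA → Matrix T0 T0 K :=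
  fun b => Matrix.of fun p q => M b (Sum.inl p) (Sum.inl q)

def Ct (P : Matrix (Q.DI i π0) (Q.DI i π0) K) : Matrix T0 T0 K :=
  Matrix.of fun p q => ∑ b : {b : Q.DA // Q.dt b = i},
    if h : π0 p = Q.dh b.1 ∧ π0 q = Q.dh b.1 then P ⟨b, ⟨p, h.1⟩⟩ ⟨b, ⟨q, h.2⟩⟩ else 0

def NMom (N : Q.DA → Matrix T0 T0 K) : Matrix T0 T0 K :=
  ∑ a : Q.A, (N (Sum.inl a) * N (Sum.inr a) - N (Sum.inr a) * N (Sum.inl a))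

/-- Number of arrows from `i` to `j` in the double. -/
def cnt (K : Type) [Field K] (j : Q.I) : K :=
  ∑ b : {b : Q.DA // Q.dt b = i}, if j = Q.dh b.1 then (1 : K) else 0

lemma mom_eq {T : Type} [Fintype T] (M : Q.DA → Matrix T T K) :
    (∑ a : Q.A, (M (Sum.inl a) * M (Sum.inr a) - M (Sum.inr a) * M (Sum.inl a)))
      = ∑ b : Q.DA, Q.sg K b • (M b * M (Sum.swap b)) := by
  rw [Fintype.sum_sum_type, Finset.sum_sub_distrib, sub_eq_add_neg, ← Finset.sum_neg_distrib]
  simp [sg]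

lemma dt_swap (b : Q.DA) : Q.dt (Sum.swap b) = Q.dh b := by rcases b with b | b <;> rfl
lemma dh_swap (b : Q.DA) : Q.dh (Sum.swap b) = Q.dt b := by rcases b with b | b <;> rfl
lemma sg_swap (b : Q.DA) : Q.sg K (Sum.swap b) = - Q.sg K b := by
  rcases b with b | b <;> simp [sg]
lemma sg_sq (b : Q.DA) : Q.sg K b * Q.sg K b = 1 := by
  rcases b with b | b <;> simp [sg]

lemma Ct_sub (P P' : Matrix (Q.DI i π0) (Q.DI i π0) K) :
    Q.Ct i π0 (P - P') = Q.Ct i π0 P - Q.Ct i π0 P' := by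
  ext p q
  simp only [Ct, Matrix.of_apply, Matrix.sub_apply, ← Finset.sum_sub_distrib]
  refine Finset.sum_congr rfl fun b _ => ?_
  split_ifs <;> simp

lemma Ct_smul_one (c : K) :
    Q.Ct i π0 (c • (1 : Matrix (Q.DI i π0) (Q.DI i π0) K))
      = Matrix.diagonal fun p => Q.cnt i K (π0 p) * c := by
  ext p q
  simp only [Ct, Matrix.of_apply, cnt]
  by_cases hpq : p = q
  · subst hpq
    rw [Matrix.diagonal_apply_eq, Finset.sum_mul]
    refine Finset.sum_congr rfl fun b _ => ?_
    by_cases h : π0 p = Q.dh b.1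
    · simp [h]
    · simp [h]
  · rw [Matrix.diagonal_apply_ne _ hpq]
    refine Finset.sum_eq_zero fun b _ => ?_
    split_ifs with h
    · rw [Matrix.smul_apply, Matrix.one_apply_ne, smul_zero]
      intro h'
      simp only [Sigma.mk.injEq, heq_eq_eq, true_and, Subtype.mk.injEq] at h'
      exact hpq h'
    · rfl

section Supp

variable (M : Q.DA → Matrix (T0 ⊕ Fin r) (T0 ⊕ Fin r) K)
  (hM : ∀ a p q, M a p q ≠ 0 → Q.piS i π0 r p = Q.dh a ∧ Q.piS i π0 r q = Q.dt a)

lemma supp12 (hM : ∀ a p q, M a p q ≠ 0 → Q.piS i π0 r p = Q.dh a ∧ Q.piS i π0 r q = Q.dt a)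
    (b p k) (h : ¬ (Q.dt b = i ∧ π0 p = Q.dh b)) : M b (Sum.inl p) (Sum.inr k) = 0 := by
  by_contra h'
  have := hM _ _ _ h'
  exact h ⟨this.2.symm, this.1⟩

lemma supp21 (hM : ∀ a p q, M a p q ≠ 0 → Q.piS i π0 r p = Q.dh a ∧ Q.piS i π0 r q = Q.dt a)
    (b p k) (h : ¬ (Q.dt b = i ∧ π0 p = Q.dh b)) :
    M (Sum.swap b) (Sum.inr k) (Sum.inl p) = 0 := by
  by_contra h'
  have := hM _ _ _ h'
  rw [dt_swap, dh_swap] at this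
  exact h ⟨this.1.symm, this.2⟩

lemma supp22 (hi : Q.Loopfree i)
    (hM : ∀ a p q, M a p q ≠ 0 → Q.piS i π0 r p = Q.dh a ∧ Q.piS i π0 r q = Q.dt a)
    (b k k') : M b (Sum.inr k) (Sum.inr k') = 0 := by
  by_contra h'
  have := hM _ _ _ h'
  rcases b with b | b
  · exact hi b ⟨this.1.symm, this.2.symm⟩
  · exact hi b ⟨this.2.symm, this.1.symm⟩

lemma mom11 (hM : ∀ a p q, M a p q ≠ 0 → Q.piS i π0 r p = Q.dh a ∧ Q.piS i π0 r q = Q.dt a)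
    (p q : T0) :
    (∑ a : Q.A, (M (Sum.inl a) * M (Sum.inr a) - M (Sum.inr a) * M (Sum.inl a)))
      (Sum.inl p) (Sum.inl q) = (Q.NMom (Q.Nm M) - Q.Ct i π0 (Q.Am i π0 M * Q.Bm i π0 M)) p q := by
  rw [mom_eq, NMom, mom_eq, Matrix.sub_apply, Matrix.sum_apply, Matrix.sum_apply]
  simp only [Matrix.smul_apply, Matrix.mul_apply, Fintype.sum_sum_type (α₁ := T0), smul_add,
    Finset.sum_add_distrib]
  rw [sub_eq_add_neg]
  congr 1
  simp only [Ct, Matrix.of_apply]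
  rw [← Finset.sum_neg_distrib, ← sum_sub (fun b : Q.DA => Q.dt b = i)]
  · refine Finset.sum_congr rfl fun b _ => ?_
    split_ifs with h
    · rw [Matrix.mul_apply, smul_eq_mul, Finset.mul_sum, ← Finset.sum_neg_distrib]
      refine Finset.sum_congr rfl fun k _ => ?_
      simp only [Am, Bm, Matrix.of_apply]
      ring
    · rw [neg_zero, smul_eq_mul]
      apply mul_eq_zero_of_right
      refine Finset.sum_eq_zero fun k _ => ?_
      by_cases h1 : π0 p = Q.dh b.1
      · rw [Q.supp21 i π0 M hM b.1 q k fun h' => h ⟨h1, h'.2⟩, mul_zero]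
      · rw [Q.supp12 i π0 M hM b.1 p k fun h' => h1 h'.2, zero_mul]
  · intro b hb
    rw [smul_eq_mul]
    apply mul_eq_zero_of_right
    refine Finset.sum_eq_zero fun k _ => ?_
    rw [Q.supp12 i π0 M hM b p k fun h' => hb h'.1, zero_mul]

lemma mom22 (hi : Q.Loopfree i)
    (hM : ∀ a p q, M a p q ≠ 0 → Q.piS i π0 r p = Q.dh a ∧ Q.piS i π0 r q = Q.dt a)
    (k k' : Fin r) :
    (∑ a : Q.A, (M (Sum.inl a) * M (Sum.inr a) - M (Sum.inr a) * M (Sum.inl a)))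
      (Sum.inr k) (Sum.inr k') = (Q.Bm i π0 M * Q.Am i π0 M) k k' := by
  rw [mom_eq, Matrix.sum_apply, Matrix.mul_apply, Fintype.sum_sigma]
  have h1 : ∀ b : {b : Q.DA // Q.dt b = i},
      ∑ p : {p : T0 // π0 p = Q.dh b.1}, Q.Bm i π0 M k ⟨b, p⟩ * Q.Am i π0 M ⟨b, p⟩ k'
      = ∑ p : T0, - Q.sg K b.1 * M (Sum.swap b.1) (Sum.inr k) (Sum.inl p)
          * M b.1 (Sum.inl p) (Sum.inr k') := by
    intro b
    rw [← sum_sub (fun p : T0 => π0 p = Q.dh b.1)]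
    · rfl
    · intro p hp
      rw [Q.supp12 i π0 M hM b.1 p k' fun h' => hp h'.2, mul_zero]
  rw [Finset.sum_congr rfl fun b _ => h1 b, sum_sub (fun b : Q.DA => Q.dt b = i)
    (fun b => ∑ p : T0, - Q.sg K b * M (Sum.swap b) (Sum.inr k) (Sum.inl p)
          * M b (Sum.inl p) (Sum.inr k'))]
  · refine Fintype.sum_equiv (Equiv.sumComm Q.A Q.A) _ _ fun b => ?_
    rw [Matrix.smul_apply, Matrix.mul_apply, Fintype.sum_sum_type, smul_eq_mul]
    simp only [Q.supp22 i π0 M hi hM, zero_mul, Finset.sum_const_zero, add_zero,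
      Equiv.sumComm_apply, Sum.swap_swap, sg_swap, neg_neg]
    rw [Finset.mul_sum]
    refine Finset.sum_congr rfl fun p _ => ?_
    ring
  · intro b hb
    refine Finset.sum_eq_zero fun p _ => ?_
    rw [Q.supp12 i π0 M hM b p k' fun h' => hb h'.1, mul_zero]

lemma mom_off {T : Type} [Fintype T] (π : T → Q.I) (M : Q.DA → Matrix T T K)
    (hM : ∀ a p q, M a p q ≠ 0 → π p = Q.dh a ∧ π q = Q.dt a) (p q : T) (hpq : π p ≠ π q) :
    (∑ a : Q.A, (M (Sum.inl a) * M (Sum.inr a) - M (Sum.inr a) * M (Sum.inl a))) p q = 0 := by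
  rw [mom_eq, Matrix.sum_apply]
  refine Finset.sum_eq_zero fun b _ => ?_
  rw [Matrix.smul_apply, Matrix.mul_apply, smul_eq_mul]
  apply mul_eq_zero_of_right
  refine Finset.sum_eq_zero fun s _ => ?_
  by_contra h
  have h1 := hM _ _ _ (left_ne_zero_of_mul h)
  have h2 := hM _ _ _ (right_ne_zero_of_mul h)
  rw [dt_swap] at h2
  exact hpq (h1.1.trans h2.2.symm)

lemma mem_iff (hi : Q.Loopfree i) (hπ : ∀ p, π0 p ≠ i) (l : Q.I → K)
    (hM : ∀ a p q, M a p q ≠ 0 → Q.piS i π0 r p = Q.dh a ∧ Q.piS i π0 r q = Q.dt a) :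
    M ∈ Q.TSet K l (Q.piS i π0 r) ↔ Q.Bm i π0 M * Q.Am i π0 M = l i • 1 ∧
      Q.NMom (Q.Nm M) - Q.Ct i π0 (Q.Am i π0 M * Q.Bm i π0 M)
        = Matrix.diagonal fun p => l (π0 p) := by
  constructor
  · rintro ⟨_, h⟩
    constructor
    · ext k k'
      rw [← Q.mom22 i π0 M hi hM, h]
      simp [Matrix.diagonal_apply, Matrix.one_apply]
    · ext p q
      rw [← Q.mom11 i π0 M hM, h]
      simp [Matrix.diagonal_apply]
  · rintro ⟨h1, h2⟩
    refine ⟨hM, ?_⟩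
    ext s t
    rcases s with p | k <;> rcases t with q | k'
    · rw [Q.mom11 i π0 M hM, h2]
      simp [Matrix.diagonal_apply]
    · rw [Q.mom_off (Q.piS i π0 r) M hM (Sum.inl p) (Sum.inr k') (hπ p)]
      simp
    · rw [Q.mom_off (Q.piS i π0 r) M hM (Sum.inr k) (Sum.inl q) (hπ q).symm]
      simp
    · rw [Q.mom22 i π0 M hi hM, h1]
      simp [Matrix.diagonal_apply, Matrix.one_apply]

end Supp

/-- Reassembling a total matrix from its pieces. -/
def mkM (N : Q.DA → Matrix T0 T0 K) (A : Matrix (Q.DI i π0) (Fin r) K)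
    (B : Matrix (Fin r) (Q.DI i π0) K) : Q.DA → Matrix (T0 ⊕ Fin r) (T0 ⊕ Fin r) K :=
  fun b => Matrix.fromBlocks (N b)
    (Matrix.of fun p k => if h : Q.dt b = i ∧ π0 p = Q.dh b then A ⟨⟨b, h.1⟩, ⟨p, h.2⟩⟩ k else 0)
    (Matrix.of fun k q => if h : Q.dt (Sum.swap b) = i ∧ π0 q = Q.dh (Sum.swap b) then
      Q.sg K b * B k ⟨⟨Sum.swap b, h.1⟩, ⟨q, h.2⟩⟩ else 0) 0

lemma mkM_supp (N : Q.DA → Matrix T0 T0 K) (A : Matrix (Q.DI i π0) (Fin r) K)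
    (B : Matrix (Fin r) (Q.DI i π0) K)
    (hN : ∀ b p q, N b p q ≠ 0 → π0 p = Q.dh b ∧ π0 q = Q.dt b) (b s t)
    (h : Q.mkM i π0 N A B b s t ≠ 0) :
    Q.piS i π0 r s = Q.dh b ∧ Q.piS i π0 r t = Q.dt b := by
  rcases s with p | k <;> rcases t with q | k'
  · exact hN b p q h
  · by_contra h'
    apply h
    have : ¬ (Q.dt b = i ∧ π0 p = Q.dh b) := fun h2 => h' ⟨h2.2, h2.1.symm⟩
    simp only [mkM, Matrix.fromBlocks_apply₁₂, Matrix.of_apply, this, dite_false]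
  · by_contra h'
    apply h
    have : ¬ (Q.dt (Sum.swap b) = i ∧ π0 q = Q.dh (Sum.swap b)) := fun h2 => h' (by
      rw [dt_swap, dh_swap] at h2
      exact ⟨h2.1.symm, h2.2⟩)
    simp only [mkM, Matrix.fromBlocks_apply₂₁, Matrix.of_apply, this, dite_false]
  · exact absurd rfl h

lemma Nm_mkM (N : Q.DA → Matrix T0 T0 K) (A : Matrix (Q.DI i π0) (Fin r) K)
    (B : Matrix (Fin r) (Q.DI i π0) K) : Q.Nm (Q.mkM i π0 N A B) = N := rfl

lemma Am_mkM (N : Q.DA → Matrix T0 T0 K) (A : Matrix (Q.DI i π0) (Fin r) K)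
    (B : Matrix (Fin r) (Q.DI i π0) K) : Q.Am i π0 (Q.mkM i π0 N A B) = A := by
  ext ⟨⟨b, hb⟩, ⟨p, hp⟩⟩ k
  have : Q.dt b = i ∧ π0 p = Q.dh b := ⟨hb, hp⟩
  simp only [Am, mkM, Matrix.fromBlocks_apply₁₂, Matrix.of_apply, this, and_self, dite_true]

lemma Bm_mkM (N : Q.DA → Matrix T0 T0 K) (A : Matrix (Q.DI i π0) (Fin r) K)
    (B : Matrix (Fin r) (Q.DI i π0) K) : Q.Bm i π0 (Q.mkM i π0 N A B) = B := by
  ext k ⟨⟨b, hb⟩, ⟨p, hp⟩⟩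
  have : Q.dt (Sum.swap (Sum.swap b)) = i ∧ π0 p = Q.dh (Sum.swap (Sum.swap b)) := by
    rw [Sum.swap_swap]; exact ⟨hb, hp⟩
  have e : ∀ (b' : Q.DA) (h : b' = b) (h1 : Q.dt b' = i) (h2 : π0 p = Q.dh b'),
      B k ⟨⟨b', h1⟩, ⟨p, h2⟩⟩ = B k ⟨⟨b, hb⟩, ⟨p, hp⟩⟩ := by
    intro b' h h1 h2; subst h; rfl
  simp only [Bm, mkM, Matrix.fromBlocks_apply₂₁, Matrix.of_apply]
  rw [dif_pos this, e _ (Sum.swap_swap b), sg_swap]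
  have := Q.sg_sq (K := K) b
  linear_combination (B k ⟨⟨b, hb⟩, ⟨p, hp⟩⟩) * this

end Reflection

end FinQuiver

namespace FinQuiver

set_option linter.unusedSectionVars false

section Reflection2

variable (Q : FinQuiver) {K : Type} [Field K]
variable [DecidableEq Q.A] (i : Q.I) {T0 : Type} [Fintype T0] [DecidableEq T0] (π0 : T0 → Q.I)
variable {r r' : ℕ}

def G0 (g : Matrix T0 T0 K) : Matrix (Q.DI i π0) (Q.DI i π0) K :=
  Matrix.blockDiagonal' fun _ => g.submatrix Subtype.val Subtype.val

lemma G0_mul (g g' : Matrix T0 T0 K) (hg : ∀ p q, g p q ≠ 0 → π0 p = π0 q) :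
    Q.G0 i π0 g * Q.G0 i π0 g' = Q.G0 i π0 (g * g') := by
  unfold G0
  rw [← Matrix.blockDiagonal'_mul]
  congr 1
  funext b
  ext ⟨p, hp⟩ ⟨q, hq⟩
  simp only [Matrix.mul_apply, Matrix.submatrix_apply]
  rw [sum_sub (fun s => π0 s = Q.dh b.1) (fun s => g p s * g' s q)]
  intro s hs
  have : g p s = 0 := by
    by_contra h
    exact hs ((hg _ _ h).symm.trans hp)
  rw [this, zero_mul]

lemma G0_one : Q.G0 i π0 (1 : Matrix T0 T0 K) = 1 := by
  unfold G0
  rw [← Matrix.blockDiagonal'_one]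
  congr 1
  funext b
  rw [Matrix.submatrix_one _ Subtype.val_injective]
  rfl

/-- Block diagonal conjugator. -/
abbrev bd (g0 : Matrix T0 T0 K) (g1 : Matrix (Fin r) (Fin r) K) :
    Matrix (T0 ⊕ Fin r) (T0 ⊕ Fin r) K := Matrix.fromBlocks g0 0 0 g1

lemma bd_entries (M : Matrix (T0 ⊕ Fin r) (T0 ⊕ Fin r) K) (g0 g0' : Matrix T0 T0 K)
    (g1 g1' : Matrix (Fin r) (Fin r) K) :
    bd g0 g1 * M * bd g0' g1' = Matrix.fromBlocks (g0 * M.toBlocks₁₁ * g0')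
      (g0 * M.toBlocks₁₂ * g1') (g1 * M.toBlocks₂₁ * g0') (g1 * M.toBlocks₂₂ * g1') := by
  conv_lhs => rw [← Matrix.fromBlocks_toBlocks M]
  rw [Matrix.fromBlocks_multiply, Matrix.fromBlocks_multiply]
  simp

lemma Nm_conj (M : Q.DA → Matrix (T0 ⊕ Fin r) (T0 ⊕ Fin r) K) (g0 g0' : Matrix T0 T0 K)
    (g1 g1' : Matrix (Fin r) (Fin r) K) (b) :
    Q.Nm (fun b => bd g0 g1 * M b * bd g0' g1') b = g0 * Q.Nm M b * g0' := by
  ext p q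
  simp only [Nm, Matrix.of_apply]
  rw [bd_entries]
  rfl

lemma Am_conj (M : Q.DA → Matrix (T0 ⊕ Fin r) (T0 ⊕ Fin r) K)
    (hM : ∀ a p q, M a p q ≠ 0 → Q.piS i π0 r p = Q.dh a ∧ Q.piS i π0 r q = Q.dt a)
    (g0 g0' : Matrix T0 T0 K) (g1 g1' : Matrix (Fin r) (Fin r) K) :
    Q.Am i π0 (fun b => bd g0 g1 * M b * bd g0' g1') = Q.G0 i π0 g0 * Q.Am i π0 M * g1' := by
  ext ⟨b, p⟩ k
  simp only [Am, Matrix.of_apply]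
  rw [bd_entries, Matrix.fromBlocks_apply₁₂, Matrix.mul_apply, Matrix.mul_apply]
  refine Finset.sum_congr rfl fun k' _ => ?_
  congr 1
  rw [G0, blk_mul, Matrix.mul_apply]
  exact (sum_sub (fun s => π0 s = Q.dh b.1) (fun s => g0 p.1 s * M b.1 (Sum.inl s) (Sum.inr k'))
    (fun s hs => by rw [Q.supp12 i π0 M hM b.1 s k' fun h => hs h.2, mul_zero])).symm

lemma Bm_conj (M : Q.DA → Matrix (T0 ⊕ Fin r) (T0 ⊕ Fin r) K)
    (hM : ∀ a p q, M a p q ≠ 0 → Q.piS i π0 r p = Q.dh a ∧ Q.piS i π0 r q = Q.dt a)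
    (g0 g0' : Matrix T0 T0 K) (g1 g1' : Matrix (Fin r) (Fin r) K) :
    Q.Bm i π0 (fun b => bd g0 g1 * M b * bd g0' g1') = g1 * (Q.Bm i π0 M * Q.G0 i π0 g0') := by
  ext k ⟨b, p⟩
  simp only [Bm, Matrix.of_apply]
  rw [bd_entries, Matrix.fromBlocks_apply₂₁, Matrix.mul_assoc, Matrix.mul_apply,
    Matrix.mul_apply, Finset.mul_sum]
  refine Finset.sum_congr rfl fun k' _ => ?_
  rw [mul_left_comm]
  congr 1
  rw [G0, mul_blk, Matrix.mul_apply, Finset.mul_sum]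
  refine Eq.trans ?_ (sum_sub (fun s => π0 s = Q.dh b.1)
    (fun s => (-Q.sg K b.1 * M (Sum.swap b.1) (Sum.inr k') (Sum.inl s)) * g0' s p.1)
    (fun s hs => by
      rw [Q.supp21 i π0 M hM b.1 s k' fun h => hs h.2, mul_zero, zero_mul])).symm
  refine Finset.sum_congr rfl fun s _ => ?_
  rw [mul_assoc]
  rfl

lemma AB_conj (M : Q.DA → Matrix (T0 ⊕ Fin r) (T0 ⊕ Fin r) K)
    (hM : ∀ a p q, M a p q ≠ 0 → Q.piS i π0 r p = Q.dh a ∧ Q.piS i π0 r q = Q.dt a)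
    (g0 g0' : Matrix T0 T0 K) (g1 g1' : Matrix (Fin r) (Fin r) K) (h : g1' * g1 = 1) :
    Q.Am i π0 (fun b => bd g0 g1 * M b * bd g0' g1') *
      Q.Bm i π0 (fun b => bd g0 g1 * M b * bd g0' g1')
      = Q.G0 i π0 g0 * (Q.Am i π0 M * Q.Bm i π0 M) * Q.G0 i π0 g0' := by
  rw [Am_conj _ _ _ _ hM, Bm_conj _ _ _ _ hM]
  calc Q.G0 i π0 g0 * Q.Am i π0 M * g1' * (g1 * (Q.Bm i π0 M * Q.G0 i π0 g0'))
      = Q.G0 i π0 g0 * Q.Am i π0 M * (g1' * g1) * (Q.Bm i π0 M * Q.G0 i π0 g0') := by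
        simp only [Matrix.mul_assoc]
    _ = _ := by rw [h, Matrix.mul_one]; simp only [Matrix.mul_assoc]

/-- The correspondence between the two moment fibres. -/
def Gam (l l' : Q.I → K) (x : ↥(Q.TSet K l (Q.piS i π0 r)))
    (y : ↥(Q.TSet K l' (Q.piS i π0 r'))) : Prop :=
  Q.Nm x.1 = Q.Nm y.1 ∧
    Q.Am i π0 y.1 * Q.Bm i π0 y.1 = Q.Am i π0 x.1 * Q.Bm i π0 x.1 - l i • 1

lemma Gam_symm (l l' : Q.I → K) (hl : l' i = - l i) (x : ↥(Q.TSet K l (Q.piS i π0 r)))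
    (y : ↥(Q.TSet K l' (Q.piS i π0 r'))) : Q.Gam i π0 l l' x y ↔ Q.Gam i π0 l' l y x := by
  unfold Gam
  rw [hl]
  constructor
  · rintro ⟨h1, h2⟩
    exact ⟨h1.symm, by rw [h2, neg_smul]; abel⟩
  · rintro ⟨h1, h2⟩
    exact ⟨h1.symm, by rw [h2, neg_smul]; abel⟩

variable [CharZero K]

lemma Gam_total (hi : Q.Loopfree i) (hπ : ∀ p, π0 p ≠ i) (l l' : Q.I → K) (hc : l i ≠ 0)
    (hli : l' i = - l i) (hl : ∀ p, l' (π0 p) = l (π0 p) + Q.cnt i K (π0 p) * l i)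
    (hcard : Fintype.card (Q.DI i π0) = r + r') (x : ↥(Q.TSet K l (Q.piS i π0 r))) :
    ∃ y : ↥(Q.TSet K l' (Q.piS i π0 r')), Q.Gam i π0 l l' x y := by
  have hx := (Q.mem_iff i π0 x.1 hi hπ l x.2.1).1 x.2
  obtain ⟨A', B', h1, h2⟩ := exists_compl hcard (l i) hc _ _ hx.1
  have hs := Q.mkM_supp i π0 (Q.Nm x.1) A' B' (fun b p q h => x.2.1 b _ _ h)
  refine ⟨⟨Q.mkM i π0 (Q.Nm x.1) A' B', (Q.mem_iff i π0 _ hi hπ l' hs).2 ?_⟩, ?_, ?_⟩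
  · rw [Am_mkM, Bm_mkM, Nm_mkM, h1, h2, hli]
    refine ⟨rfl, ?_⟩
    rw [Ct_sub, Ct_smul_one, ← sub_add, hx.2, Matrix.diagonal_add]
    congr 1
    funext p
    exact (hl p).symm
  · rfl
  · change Q.Am i π0 (Q.mkM i π0 (Q.Nm x.1) A' B') * Q.Bm i π0 (Q.mkM i π0 (Q.Nm x.1) A' B') = _
    rw [Am_mkM, Bm_mkM, h2]

lemma bd_supp (hπ : ∀ p, π0 p ≠ i) (g : Matrix (T0 ⊕ Fin r) (T0 ⊕ Fin r) K)
    (hg : ∀ p q, g p q ≠ 0 → Q.piS i π0 r p = Q.piS i π0 r q) :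
    g = bd g.toBlocks₁₁ g.toBlocks₂₂ := by
  ext s t
  rcases s with p | k <;> rcases t with q | k'
  · rfl
  · by_contra h
    exact hπ p (hg _ _ h)
  · by_contra h
    exact hπ q (hg _ _ h).symm
  · rfl

lemma supp_bd (g0 : Matrix T0 T0 K) (g1 : Matrix (Fin r) (Fin r) K)
    (hg : ∀ p q, g0 p q ≠ 0 → π0 p = π0 q) (s t) (h : bd g0 g1 s t ≠ 0) :
    Q.piS i π0 r s = Q.piS i π0 r t := by
  rcases s with p | k <;> rcases t with q | k'
  · exact hg _ _ h
  · exact absurd rfl h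
  · exact absurd rfl h
  · rfl

lemma Gam_rel (hi : Q.Loopfree i) (hπ : ∀ p, π0 p ≠ i) (l l' : Q.I → K) (hc : l i ≠ 0)
    (hli : l' i = - l i) (hl : ∀ p, l' (π0 p) = l (π0 p) + Q.cnt i K (π0 p) * l i)
    (hcard : Fintype.card (Q.DI i π0) = r + r') (x x' : ↥(Q.TSet K l (Q.piS i π0 r)))
    (h : Q.TRel K (Q.piS i π0 r) x.1 x'.1) :
    ∃ y y' : ↥(Q.TSet K l' (Q.piS i π0 r')), Q.Gam i π0 l l' x y ∧ Q.Gam i π0 l l' x' y' ∧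
      Q.TRel K (Q.piS i π0 r') y.1 y'.1 := by
  obtain ⟨g, g', hg, hg', h1, h2, h3⟩ := h
  obtain ⟨y, hy⟩ := Q.Gam_total i π0 hi hπ l l' hc hli hl hcard x
  have eg := Q.bd_supp i π0 hπ g hg
  have eg' := Q.bd_supp i π0 hπ g' hg'
  set g0 := g.toBlocks₁₁
  set g1 := g.toBlocks₂₂
  set g0' := g'.toBlocks₁₁
  set g1' := g'.toBlocks₂₂
  have hg0 : ∀ p q, g0 p q ≠ 0 → π0 p = π0 q := fun p q h => hg _ _ h
  have hg0' : ∀ p q, g0' p q ≠ 0 → π0 p = π0 q := fun p q h => hg' _ _ h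
  rw [eg, eg', Matrix.fromBlocks_multiply, ← Matrix.fromBlocks_one, Matrix.fromBlocks_inj] at h1 h2
  simp only [Matrix.zero_mul, Matrix.mul_zero, add_zero, zero_add] at h1 h2
  have e1 : bd g0 (1 : Matrix (Fin r') (Fin r') K) * bd g0' 1 = 1 := by
    rw [Matrix.fromBlocks_multiply, ← Matrix.fromBlocks_one]; simp [h1.1]
  have e2 : bd g0' (1 : Matrix (Fin r') (Fin r') K) * bd g0 1 = 1 := by
    rw [Matrix.fromBlocks_multiply, ← Matrix.fromBlocks_one]; simp [h2.1]
  have hs := Q.supp_bd i π0 g0 (1 : Matrix (Fin r') (Fin r') K) hg0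
  have hs' := Q.supp_bd i π0 g0' (1 : Matrix (Fin r') (Fin r') K) hg0'
  have hx' : x'.1 = fun b => bd g0 g1 * x.1 b * bd g0' g1' := by
    funext b
    rw [h3, ← eg, ← eg']
  refine ⟨y, ⟨_, Q.TSet_conj l' _ y.1 y.2 _ _ hs hs' e1 e2⟩, hy, ⟨?_, ?_⟩,
    ⟨_, _, hs, hs', e1, e2, fun a => rfl⟩⟩
  · rw [hx']
    funext b
    rw [Nm_conj, Nm_conj, hy.1]
  · rw [hx', AB_conj _ _ _ _ x.2.1 _ _ _ _ h2.2.2.2, AB_conj _ _ _ _ y.2.1 _ _ _ _ (mul_one 1),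
      hy.2, Matrix.mul_sub, Matrix.sub_mul, Matrix.mul_smul, Matrix.smul_mul, Matrix.mul_one,
      G0_mul _ _ _ _ _ hg0, h1.1, G0_one]

lemma mem_of_eq_zero {X : Type} (S : Subalgebra K (X → K)) (f : X → K) (h : ∀ x, f x = 0) :
    f ∈ S := by
  have : f = 0 := funext h
  rw [this]; exact S.zero_mem

lemma mem_of_eq_smul {X : Type} (S : Subalgebra K (X → K)) (f g : X → K) (c : K)
    (h : f = c • g) (hg : g ∈ S) : f ∈ S := by
  rw [h]; exact S.smul_mem hg c

lemma Gam_fun (hi : Q.Loopfree i) (hπ : ∀ p, π0 p ≠ i) (l l' : Q.I → K) (hc : l i ≠ 0)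
    (f : ↥(Q.TSet K l (Q.piS i π0 r)) → K) (hf : f ∈ Q.TInv K l (Q.piS i π0 r)) :
    ∃ f' ∈ Algebra.adjoin K (Q.TG K l' (Q.piS i π0 r')), ∀ x y, Q.Gam i π0 l l' x y →
      f x = f' y := by
  have key := key_inv (X := ↥(Q.TSet K l (Q.piS i π0 r))) (ι := Q.DA × T0 × T0)
    (l i) hc (fun c x => x.1 c.1 (Sum.inl c.2.1) (Sum.inl c.2.2))
    (fun x => Q.Am i π0 x.1) (fun x => Q.Bm i π0 x.1)
    (fun x => ((Q.mem_iff i π0 x.1 hi hπ l x.2.1).1 x.2).1) f ?_ ?_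
  · refine transfer_adjoin _ (Q.Gam i π0 l l') ?_ f key
    rintro _ (⟨⟨b, p, q⟩, rfl⟩ | ⟨⟨d, d'⟩, rfl⟩)
    · refine ⟨_, Algebra.subset_adjoin ⟨(b, Sum.inl p, Sum.inl q), rfl⟩, ?_⟩
      intro x y hxy
      exact congrFun (congrFun (congrFun hxy.1 b) p) q
    · refine ⟨(∑ k : Fin r', (fun y => y.1 d.1.1 (Sum.inl d.2.1) (Sum.inr k)) *
          ((- Q.sg K d'.1.1) • fun y => y.1 (Sum.swap d'.1.1) (Sum.inr k) (Sum.inl d'.2.1)))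
          + algebraMap K _ ((l i • (1 : Matrix (Q.DI i π0) (Q.DI i π0) K)) d d'), ?_, ?_⟩
      · refine Subalgebra.add_mem _ (Subalgebra.sum_mem _ fun k _ => Subalgebra.mul_mem _ ?_
          (Subalgebra.smul_mem _ ?_ _)) (Subalgebra.algebraMap_mem _ _)
        · exact Algebra.subset_adjoin ⟨(d.1.1, Sum.inl d.2.1, Sum.inr k), rfl⟩
        · exact Algebra.subset_adjoin ⟨(Sum.swap d'.1.1, Sum.inr k, Sum.inl d'.2.1), rfl⟩
      · intro x y hxy
        have h := congrFun (congrFun hxy.2 d) d'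
        rw [Matrix.sub_apply] at h
        change (Q.Am i π0 x.1 * Q.Bm i π0 x.1) d d' = _
        rw [eq_add_of_sub_eq h.symm, Matrix.mul_apply]
        simp only [Pi.add_apply, Finset.sum_apply, Pi.mul_apply]
        rfl
  · refine (Algebra.adjoin_le ?_ : Algebra.adjoin K (Q.TG K l (Q.piS i π0 r)) ≤ _) hf.1
    rintro _ ⟨⟨b, s, t⟩, rfl⟩
    rcases s with p | k <;> rcases t with q | k'
    · exact Algebra.subset_adjoin (Or.inl ⟨(b, p, q), rfl⟩)
    · by_cases h : Q.dt b = i ∧ π0 p = Q.dh b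
      · exact Algebra.subset_adjoin (Or.inr (Or.inl ⟨(⟨⟨b, h.1⟩, ⟨p, h.2⟩⟩, k'), rfl⟩))
      · exact mem_of_eq_zero _ _ fun x => Q.supp12 i π0 x.1 x.2.1 b p k' h
    · obtain ⟨b, rfl⟩ : ∃ b', b = Sum.swap b' := ⟨Sum.swap b, (Sum.swap_swap b).symm⟩
      by_cases h : Q.dt b = i ∧ π0 q = Q.dh b
      · have h1 : (fun x : ↥(Q.TSet K l (Q.piS i π0 r)) => x.1 (Sum.swap b) (Sum.inr k)
            (Sum.inl q)) = (- Q.sg K b) • fun x : ↥(Q.TSet K l (Q.piS i π0 r)) =>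
              Q.Bm i π0 x.1 k ⟨⟨b, h.1⟩, ⟨q, h.2⟩⟩ := by
          funext x
          simp only [Pi.smul_apply, smul_eq_mul, Bm, Matrix.of_apply]
          have := Q.sg_sq (K := K) b
          linear_combination (- x.1 (Sum.swap b) (Sum.inr k) (Sum.inl q)) * this
        exact mem_of_eq_smul _ _ _ _ h1 (Algebra.subset_adjoin (Or.inr (Or.inr
          ⟨(k, ⟨⟨b, h.1⟩, ⟨q, h.2⟩⟩), rfl⟩)))
      · exact mem_of_eq_zero _ _ fun x => Q.supp21 i π0 x.1 x.2.1 b q k h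
    · exact mem_of_eq_zero _ _ fun x => Q.supp22 i π0 x.1 hi x.2.1 b k k'
  · intro x g g' hgg
    have hgg' : g' * g = 1 := mul_eq_one_comm.1 hgg
    have e1 : bd (1 : Matrix T0 T0 K) g * bd 1 g' = 1 := by
      rw [Matrix.fromBlocks_multiply, ← Matrix.fromBlocks_one]; simp [hgg]
    have e2 : bd (1 : Matrix T0 T0 K) g' * bd 1 g = 1 := by
      rw [Matrix.fromBlocks_multiply, ← Matrix.fromBlocks_one]; simp [hgg']
    have h10 : ∀ p q, (1 : Matrix T0 T0 K) p q ≠ 0 → π0 p = π0 q := by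
      intro p q h
      by_contra h'
      exact h (Matrix.one_apply_ne fun h2 => h' (by rw [h2]))
    have hs := Q.supp_bd i π0 1 g h10
    have hs' := Q.supp_bd i π0 1 g' h10
    have hmem := Q.TSet_conj l _ x.1 x.2 _ _ hs hs' e1 e2
    refine ⟨⟨_, hmem⟩, ?_, ?_, ?_, ?_⟩
    · rintro ⟨b, p, q⟩
      have := congrFun (congrFun (Q.Nm_conj x.1 1 1 g g' b) p) q
      rw [Matrix.one_mul, Matrix.mul_one] at this
      exact this
    · refine (Q.Am_conj i π0 x.1 x.2.1 1 1 g g').trans ?_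
      rw [G0_one, Matrix.one_mul]
    · refine (Q.Bm_conj i π0 x.1 x.2.1 1 1 g g').trans ?_
      rw [G0_one, Matrix.mul_one]
    · exact (hf.2 x ⟨_, hmem⟩ ⟨_, _, hs, hs', e1, e2, fun a => rfl⟩).symm

lemma refl_tinv (hi : Q.Loopfree i) (hπ : ∀ p, π0 p ≠ i) (l l' : Q.I → K) (hc : l i ≠ 0)
    (hli : l' i = - l i) (hl : ∀ p, l' (π0 p) = l (π0 p) + Q.cnt i K (π0 p) * l i)
    (hcard : Fintype.card (Q.DI i π0) = r + r') :
    Nonempty (Q.TInv K l (Q.piS i π0 r) ≃ₐ[K] Q.TInv K l' (Q.piS i π0 r')) := by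
  have hc' : l' i ≠ 0 := by rw [hli]; exact neg_ne_zero.2 hc
  have hli' : l i = - l' i := by rw [hli, neg_neg]
  have hl' : ∀ p, l (π0 p) = l' (π0 p) + Q.cnt i K (π0 p) * l' i := by
    intro p; rw [hl, hli]; ring
  have hcard' : Fintype.card (Q.DI i π0) = r' + r := by rw [hcard, add_comm]
  refine inv_iso _ _ _ _ (Q.Gam i π0 l l') ?_ ?_ ?_ ?_ ?_ ?_
  · exact Q.Gam_total i π0 hi hπ l l' hc hli hl hcard
  · intro y
    obtain ⟨x, hx⟩ := Q.Gam_total i π0 hi hπ l' l hc' hli' hl' hcard' y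
    exact ⟨x, (Q.Gam_symm i π0 l l' hli x y).2 hx⟩
  · exact fun f hf => Q.Gam_fun i π0 hi hπ l l' hc f hf
  · intro f hf
    obtain ⟨f', hf', h⟩ := Q.Gam_fun (r' := r) i π0 hi hπ l' l hc' f hf
    exact ⟨f', hf', fun x y hxy => (h y x ((Q.Gam_symm i π0 l l' hli x y).1 hxy)).symm⟩
  · intro y y' h
    obtain ⟨x, x', h1, h2, h3⟩ := Q.Gam_rel i π0 hi hπ l' l hc' hli' hl' hcard' y y' h
    exact ⟨x, x', (Q.Gam_symm i π0 l l' hli x y).2 h1, (Q.Gam_symm i π0 l l' hli x' y').2 h2, h3⟩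
  · exact Q.Gam_rel i π0 hi hπ l l' hc hli hl hcard

end Reflection2

end FinQuiver

namespace FinQuiver

section Final

variable (Q : FinQuiver)

lemma bil_ev_dbl (α : Q.I → ℤ) (i : Q.I) : Q.bil α (Q.ev i) = 2 * α i
    - ∑ b : {b : Q.DA // Q.dt b = i}, α (Q.dh b.1) := by
  unfold bil
  have h1 : ∑ a : Q.DA, α (Q.dh a) * Q.ev i (Q.dt a)
      = ∑ b : {b : Q.DA // Q.dt b = i}, α (Q.dh b.1) := by
    rw [← Finset.sum_subtype (Finset.univ.filter fun b : Q.DA => Q.dt b = i) (by simp)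
      (fun b => α (Q.dh b)), Finset.sum_filter]
    refine Finset.sum_congr rfl fun b _ => ?_
    simp [ev]
  rw [h1]
  simp [ev]

lemma coRefl_cnt {K : Type} [Field K] (i j : Q.I) (hij : j ≠ i) (l : Q.I → K) :
    Q.coRefl K i l j = l j + Q.cnt i K j * l i := by
  unfold coRefl cnt
  rw [Q.bil_symm, bil_ev_dbl]
  have h : Q.ev j i = 0 := by simp [ev, hij.symm]
  rw [h]
  have : ((∑ b : {b : Q.DA // Q.dt b = i}, Q.ev j (Q.dh b.1) : ℤ) : K)
      = ∑ b : {b : Q.DA // Q.dt b = i}, if j = Q.dh b.1 then (1 : K) else 0 := by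
    rw [Int.cast_sum]
    refine Finset.sum_congr rfl fun b _ => ?_
    unfold ev
    by_cases h : j = Q.dh b.1
    · simp [h]
    · simp [h, Ne.symm h]
  rw [Int.cast_sub, this]
  simp only [mul_zero, Int.cast_zero]
  ring

lemma dh_ne (i : Q.I) (hi : Q.Loopfree i) (b : Q.DA) (hb : Q.dt b = i) : Q.dh b ≠ i := by
  rcases b with a | a
  · exact fun h => hi a ⟨h, hb⟩
  · exact fun h => hi a ⟨hb, h⟩

/-- Splitting off the vertex `i`. -/
def splitEquiv (i : Q.I) (α : Q.I → ℕ) (α' : Q.I → ℕ) (h : ∀ j, j ≠ i → α' j = α j) :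
    ((Σ j : {j : Q.I // j ≠ i}, Fin (α j.1)) ⊕ Fin (α' i)) ≃ (Σ j : Q.I, Fin (α' j)) where
  toFun := Sum.elim (fun p => ⟨p.1.1, Fin.cast (h _ p.1.2).symm p.2⟩) (fun k => ⟨i, k⟩)
  invFun p := if hp : p.1 = i then Sum.inr (Fin.cast (by rw [hp]) p.2)
    else Sum.inl ⟨⟨p.1, hp⟩, Fin.cast (h _ hp) p.2⟩
  left_inv := by
    rintro (⟨⟨j, hj⟩, k⟩ | k)
    · simp [hj]; rfl
    · simp
  right_inv := by
    rintro ⟨j, k⟩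
    by_cases hj : j = i
    · subst hj; simp
    · simp [hj]

lemma split_iso {K : Type} [Field K] (l : Q.I → K) (i : Q.I) (α α' : Q.I → ℕ)
    (h : ∀ j, j ≠ i → α' j = α j) :
    Nonempty (Q.InvRing K l α' ≃ₐ[K]
      Q.TInv K l (Q.piS i (fun p : (Σ j : {j : Q.I // j ≠ i}, Fin (α j.1)) => p.1.1) (α' i))) := by
  obtain ⟨e1⟩ := Q.invRing_iso l α'
  obtain ⟨e2⟩ := tinv_transfer Q Q l (Sigma.fst : (Σ i, Fin (α' i)) → Q.I)
    (Q.piS i (fun p : (Σ j : {j : Q.I // j ≠ i}, Fin (α j.1)) => p.1.1) (α' i)) id id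
    Function.injective_id Function.injective_id (fun _ => rfl) (fun _ => rfl)
    (Q.splitEquiv i α α' h) (by rintro (p | k) <;> rfl) (fun a _ _ => ⟨a, rfl⟩)
  exact ⟨e1.trans e2⟩

lemma refl_iso {K : Type} [Field K] [CharZero K] (l : Q.I → K) (i : Q.I) (hi : Q.Loopfree i)
    (hc : l i ≠ 0) (α α' : Q.I → ℕ) (h : Q.toZ α' = Q.refl i (Q.toZ α)) :
    Nonempty (Q.InvRing K l α ≃ₐ[K] Q.InvRing K (Q.coRefl K i l) α') := by
  classical
  have hne : ∀ j, j ≠ i → α' j = α j := by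
    intro j hj
    have := congrFun h j
    rw [refl_apply_ne _ _ _ hj] at this
    exact Int.ofNat_inj.1 this
  obtain ⟨e1⟩ := Q.split_iso l i α α (fun _ _ => rfl)
  obtain ⟨e2⟩ := Q.split_iso (Q.coRefl K i l) i α α' hne
  obtain ⟨e⟩ := Q.refl_tinv i (fun p : (Σ j : {j : Q.I // j ≠ i}, Fin (α j.1)) => p.1.1) hi
    (fun p => p.1.2) l (Q.coRefl K i l) hc (Q.coRefl_self K i hi l)
    (fun p => Q.coRefl_cnt i _ p.1.2 l) (r := α i) (r' := α' i) (by
      have h1 := congrFun h i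
      rw [refl_apply_self, bil_ev_dbl] at h1
      have h2 : Fintype.card (Q.DI i (fun p : (Σ j : {j : Q.I // j ≠ i}, Fin (α j.1)) => p.1.1))
          = ∑ b : {b : Q.DA // Q.dt b = i}, α (Q.dh b.1) := by
        unfold DI
        rw [Fintype.card_sigma]
        refine Finset.sum_congr rfl fun b _ => ?_
        have hb := Q.dh_ne i hi b.1 b.2
        rw [← Fintype.card_fin (α (Q.dh b.1))]
        refine Fintype.card_congr ⟨fun p => Fin.cast (congrArg α p.2) p.1.2,
          fun k => ⟨⟨⟨_, hb⟩, k⟩, rfl⟩, ?_, fun k => rfl⟩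
        rintro ⟨⟨⟨j, hj⟩, k⟩, h⟩
        dsimp only at h
        subst h
        rfl
      rw [h2]
      unfold toZ at h1
      zify
      linarith)
  exact ⟨(e1.trans e).trans e2.symm⟩

lemma main_induct (K : Type) [Field K] [CharZero K] (n : ℕ) :
    ∀ (l : Q.I → K) (β : Q.I → ℕ), ∑ i, β i = n →
    Q.toZ β ∈ Q.SigmaSet K l → Q.pp (Q.toZ β) = 1 →
    ∃ (l' : Q.I → K) (β' : Q.I → ℤ),
      Q.AdmEquiv K (l, Q.toZ β) (l', β') ∧ (∀ i, 0 ≤ β' i) ∧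
      (Q.suppQuiver β').IsExtDynkin ∧
      (Q.suppQuiver β').IsMinImag (fun i => β' i.1) ∧
      Nonempty (Q.InvRing K l β ≃ₐ[K] Q.InvRing K l' (fun i => (β' i).toNat)) := by
  induction n using Nat.strong_induction_on with
  | _ n ih =>
    intro l β hn hβ hp
    by_cases hex : ∃ i, Q.Loopfree i ∧ 0 < Q.bil (Q.toZ β) (Q.ev i)
    · obtain ⟨i, hi, hpos⟩ := hex
      have hc := Q.adm_of_pos K i hi l _ hβ hp hpos
      have hS := Q.Sigma_refl K i hi l hc _ hβ
      have hnn : ∀ j, 0 ≤ Q.refl i (Q.toZ β) j := hS.1.1.2.1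
      have hβ1 : Q.toZ (fun j => (Q.refl i (Q.toZ β) j).toNat) = Q.refl i (Q.toZ β) := by
        funext j
        exact Int.toNat_of_nonneg (hnn j)
      set β1 : Q.I → ℕ := fun j => (Q.refl i (Q.toZ β) j).toNat with hdef
      have hlt : ∑ j, β1 j < n := by
        rw [← hn]
        refine Finset.sum_lt_sum ?_ ⟨i, Finset.mem_univ i, ?_⟩
        · intro j _
          by_cases hj : j = i
          · have := congrFun hβ1 i
            rw [refl_apply_self] at this
            unfold toZ at this hpos
            subst hj
            omega
          · have := congrFun hβ1 j
            rw [refl_apply_ne _ _ _ hj] at this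
            unfold toZ at this
            omega
        · have := congrFun hβ1 i
          rw [refl_apply_self] at this
          unfold toZ at this hpos
          omega
      obtain ⟨l', β', h1, h2, h3, h4, ⟨e⟩⟩ := ih _ hlt (Q.coRefl K i l) β1 rfl
        (by rw [hβ1]; exact hS) (by rw [hβ1, Q.pp_refl i hi]; exact hp)
      obtain ⟨e'⟩ := Q.refl_iso l i hi hc β β1 hβ1
      refine ⟨l', β', ?_, h2, h3, h4, ⟨e'.trans e⟩⟩
      refine Relation.EqvGen.trans _ _ _ (Relation.EqvGen.rel _ _ ?_) h1
      exact ⟨i, hi, hc, rfl, hβ1⟩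
    · have hle : ∀ i, Q.bil (Q.toZ β) (Q.ev i) ≤ 0 := by
        intro i
        by_cases hi : Q.Loopfree i
        · by_contra h
          exact hex ⟨i, hi, not_le.1 h⟩
        · exact Q.bil_loop _ hβ.1.1.2.1 i hi
      obtain ⟨h1, h2⟩ := Q.extDynkin_of_fund K l _ hβ hp hle
      refine ⟨l, Q.toZ β, Relation.EqvGen.refl _, hβ.1.1.2.1, h1, h2, ⟨?_⟩⟩
      have : (fun i => (Q.toZ β i).toNat) = β := by funext i; simp [toZ]
      rw [this]

end Final

end FinQuiver

/-- if `β` is an isotropic imaginary root (`p(β) = 1`) in `Σ_λ`, then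
some sequence of admissible reflections sends `(λ,β)` to a pair `(λ',β')` where the
support quiver `Q'` of `β'` is extended Dynkin and `β'` is its minimal positive
imaginary root `δ`; consequently `N(λ,β) ≅ N(λ',δ)`.  (The varieties `N(λ',δ)` for
the restriction of `λ'` to the extended Dynkin support quiver are, by Kronheimer's
work as in [CBH, §8], precisely the deformations of the Kleinian singularity of
type `Q'`; the final clause expresses `N(λ,β)` as such a deformation.) -/
theorem stmt4 (Q : FinQuiver) (K : Type) [Field K] [CharZero K] [IsAlgClosed K]
    (l : Q.I → K) (β : Q.I → ℕ)
    (hβ : Q.toZ β ∈ Q.SigmaSet K l) (hiso : Q.pp (Q.toZ β) = 1) :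
    ∃ (l' : Q.I → K) (β' : Q.I → ℤ),
      Q.AdmEquiv K (l, Q.toZ β) (l', β') ∧ (∀ i, 0 ≤ β' i) ∧
      (Q.suppQuiver β').IsExtDynkin ∧
      (Q.suppQuiver β').IsMinImag (fun i => β' i.1) ∧
      Nonempty (Q.InvRing K l β ≃ₐ[K] Q.InvRing K l' (fun i => (β' i).toNat)) ∧
      Nonempty (Q.InvRing K l β ≃ₐ[K]
        (Q.suppQuiver β').InvRing K (fun i => l' i.1) (fun i => (β' i.1).toNat)) := by
  obtain ⟨l', β', h1, h2, h3, h4, ⟨e⟩⟩ := Q.main_induct K _ l β rfl hβ hiso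
  obtain ⟨e'⟩ := Q.supp_iso l' β'
  exact ⟨l', β', h1, h2, h3, h4, ⟨e⟩, ⟨e.trans e'⟩⟩

end
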